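/- arXiv:2508.09794 — 3 statements merged into one kernel-verified Lean document; each statement's English description precedes it below -/
import Mathlib

section
/- Let (R, ν_R) and (Q, ν_Q) be normalized BV₀ pairs on (−1,1). Then for every continuously differentiable function φ : ℝ → ℝ whose support is a compact subset of (−1,1), one has ∫_{(−1,1)} φ′(t)·R(t)·Q(t) dt = ∫_{(−1,1)} φ(t)·t·Q(t⁻) dν_R(t) + ∫_{(−1,1)} φ(t)·t·R(t⁺) dν_Q(t), and the same identity holds with Q(t⁻) and R(t⁺) replaced by Q(t⁺) and R(t⁻), respectively. -/
open MeasureTheory Set Filter Function Topology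

/-- A normalized BV₀ pair on `(-1,1)`: a signed Borel measure, represented by its
mutually singular positive part `νp` and negative part `νm`, that is finite on compact
subsets of `(-1,1)`, gives no mass to `{0}` and lives on `(-1,1)`, together with a
function `R` satisfying the fundamental-theorem-of-calculus relations. -/
structure NormBV0 where
  R : ℝ → ℝ
  νp : Measure ℝ
  νm : Measure ℝ
  sing : νp.MutuallySingular νm
  supp_p : νp (Set.Ioo (-1 : ℝ) 1)ᶜ = 0
  supp_m : νm (Set.Ioo (-1 : ℝ) 1)ᶜ = 0
  locfin_p : ∀ K : Set ℝ, IsCompact K → K ⊆ Set.Ioo (-1 : ℝ) 1 → νp K ≠ ⊤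
  locfin_m : ∀ K : Set ℝ, IsCompact K → K ⊆ Set.Ioo (-1 : ℝ) 1 → νm K ≠ ⊤
  zero_p : νp {0} = 0
  zero_m : νm {0} = 0
  fund_pos : ∀ t ∈ Set.Ico (0 : ℝ) 1,
    R t = R 0 - ((∫ s in Set.Ioc (0 : ℝ) t, s ∂νp) - (∫ s in Set.Ioc (0 : ℝ) t, s ∂νm))
  fund_neg : ∀ t ∈ Set.Ioc (-1 : ℝ) 0,
    R t = R 0 + ((∫ s in Set.Ico t (0 : ℝ), s ∂νp) - (∫ s in Set.Ico t (0 : ℝ), s ∂νm))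

/-- The integral of `f` over `S` with respect to the signed measure `νp - νm`. -/
noncomputable def NormBV0.integ (P : NormBV0) (S : Set ℝ) (f : ℝ → ℝ) : ℝ :=
  (∫ s in S, f s ∂P.νp) - (∫ s in S, f s ∂P.νm)

/-- The transform `T_{R,ν} f`. -/
noncomputable def NormBV0.T (P : NormBV0) (f : ℝ → ℝ) (t : ℝ) : ℝ :=
  if 0 < t then P.R t * f t + t * P.integ (Set.Ioc 0 t) f
  else P.R t * f t - t * P.integ (Set.Ico t 0) f

/-!
On a neighbourhood `(-r, r)` of the support of `φ`, with `r < 1`, the fundamental theorem of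
calculus relations say that `R t` is, up to a constant, the integral of `-s dν(s)` over a half-line
ending at `t`; whether `t` itself belongs to the half-line depends on its sign. An atom at `-1`,
outside that neighbourhood, absorbs the constant. Write `μ_R` and `μ_Q` for the resulting measures.
Only countably many points are atoms, so closed half-lines may be used inside `∫ φ' R Q`, which by
Fubini equals

`∬ (∫_{max(x, y) ≤ t} φ'(t) dt) dμ_R(x) dμ_Q(y) = -∬ φ(max(x, y)) dμ_R(x) dμ_Q(y)`.

On `y < x` the inner integral in `y` is `μ_Q((-∞, x)) = Q(x⁻)`, and on `x ≤ y` the inner integral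
in `x` is `μ_R((-∞, y]) = R(y⁺)`. Exchanging the roles of `R` and `Q` puts the diagonal on the
other side.
-/

section ProductSections

variable {X Y E : Type*} [MeasurableSpace X] [MeasurableSpace Y] [NormedAddCommGroup E]
  [NormedSpace ℝ E] {μ : Measure X} {ν : Measure Y}
  {H : X × Y → E} {T : Set (X × Y)}

lemma integral_indicator_prodMk_left (hT : MeasurableSet T) (x : X) :
    ∫ y, T.indicator H (x, y) ∂ν = ∫ y in {y | (x, y) ∈ T}, H (x, y) ∂ν :=
  integral_indicator (f := fun y => H (x, y)) (measurable_prodMk_left hT)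

lemma integral_indicator_prodMk_right (hT : MeasurableSet T) (y : Y) :
    ∫ x, T.indicator H (x, y) ∂μ = ∫ x in {x | (x, y) ∈ T}, H (x, y) ∂μ :=
  integral_indicator (f := fun x => H (x, y)) (measurable_prodMk_right hT)

variable [SFinite ν]

lemma integrable_setIntegral_section_left (hT : MeasurableSet T)
    (hH : IntegrableOn H T (μ.prod ν)) :
    Integrable (fun x => ∫ y in {y | (x, y) ∈ T}, H (x, y) ∂ν) μ := by
  simpa only [integral_indicator_prodMk_left hT] using
    (hH.integrable_indicator hT).integral_prod_left

lemma setIntegral_prod_eq_integral_section_left [SFinite μ] (hT : MeasurableSet T)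
    (hH : IntegrableOn H T (μ.prod ν)) :
    ∫ z in T, H z ∂(μ.prod ν) = ∫ x, ∫ y in {y | (x, y) ∈ T}, H (x, y) ∂ν ∂μ := by
  simp only [← integral_indicator hT, ← integral_indicator_prodMk_left hT,
    integral_prod _ (hH.integrable_indicator hT)]

lemma integrable_setIntegral_section_right [SFinite μ] (hT : MeasurableSet T)
    (hH : IntegrableOn H T (μ.prod ν)) :
    Integrable (fun y => ∫ x in {x | (x, y) ∈ T}, H (x, y) ∂μ) ν := by
  simpa only [integral_indicator_prodMk_right hT] using
    (hH.integrable_indicator hT).integral_prod_right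

lemma setIntegral_prod_eq_integral_section_right [SFinite μ] (hT : MeasurableSet T)
    (hH : IntegrableOn H T (μ.prod ν)) :
    ∫ z in T, H z ∂(μ.prod ν) = ∫ y, ∫ x in {x | (x, y) ∈ T}, H (x, y) ∂μ ∂ν := by
  simp only [← integral_indicator hT, ← integral_indicator_prodMk_right hT,
    integral_prod_symm _ (hH.integrable_indicator hT)]

end ProductSections

section CumulativeIntegrals

variable {α 𝕜 : Type*} [LinearOrder α] [TopologicalSpace α] [OrderClosedTopology α]
  [MeasurableSpace α] [OpensMeasurableSpace α] [RCLike 𝕜]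
  {μ ν ρ : Measure α} {f g ψ : α → 𝕜}

lemma setIntegral_Iio_tail_max (x : α) :
    ∫ y in Iio x, (∫ t in Ici (max x y), ψ t ∂ρ) * (f x * g y) ∂ν =
      (∫ t in Ici x, ψ t ∂ρ) * f x * ∫ y in Iio x, g y ∂ν := by
  rw [← integral_const_mul]
  refine setIntegral_congr_fun measurableSet_Iio fun y hy => ?_
  simp only [max_eq_left (mem_Iio.1 hy).le, mul_assoc]

lemma setIntegral_Iic_tail_max (y : α) :
    ∫ x in Iic y, (∫ t in Ici (max x y), ψ t ∂ρ) * (f x * g y) ∂μ =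
      (∫ t in Ici y, ψ t ∂ρ) * g y * ∫ x in Iic y, f x ∂μ := by
  rw [← integral_const_mul]
  refine setIntegral_congr_fun measurableSet_Iic fun x hx => ?_
  simp only [max_eq_right (mem_Iic.1 hx)]
  ring

variable [SecondCountableTopology α]

section Fubini

variable [SFinite ρ] {Z : Type*} [MeasurableSpace Z] {π : Measure Z} [SFinite π] {m : Z → α}
  {h : Z → 𝕜}

lemma integrable_setIntegral_Ici_mul (hm : Measurable m) (hψ : Integrable ψ ρ)
    (hh : Integrable h π) : Integrable (fun z => (∫ t in Ici (m z), ψ t ∂ρ) * h z) π := by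
  simp only [← integral_mul_const]
  exact integrable_setIntegral_section_right (H := fun p => ψ p.1 * h p.2)
    (measurableSet_le (hm.comp measurable_snd) measurable_fst) (hψ.mul_prod hh).integrableOn

lemma integral_mul_setIntegral_le (hm : Measurable m) (hψ : Integrable ψ ρ)
    (hh : Integrable h π) :
    ∫ t, ψ t * ∫ z in {z | m z ≤ t}, h z ∂π ∂ρ =
      ∫ z, (∫ t in Ici (m z), ψ t ∂ρ) * h z ∂π := by
  have hT : MeasurableSet {p : α × Z | m p.2 ≤ p.1} :=
    measurableSet_le (hm.comp measurable_snd) measurable_fst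
  have hH : IntegrableOn (fun p : α × Z => ψ p.1 * h p.2) {p | m p.2 ≤ p.1} (ρ.prod π) :=
    (hψ.mul_prod hh).integrableOn
  simp only [← integral_mul_const, ← integral_const_mul]
  exact (setIntegral_prod_eq_integral_section_left hT hH).symm.trans
    (setIntegral_prod_eq_integral_section_right hT hH)

end Fubini

variable [SFinite μ] [SFinite ν] [SFinite ρ]

lemma integrable_setIntegral_Ici_max_mul (hψ : Integrable ψ ρ) (hf : Integrable f μ)
    (hg : Integrable g ν) :
    Integrable (fun z : α × α => (∫ t in Ici (max z.1 z.2), ψ t ∂ρ) * (f z.1 * g z.2))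
      (μ.prod ν) :=
  integrable_setIntegral_Ici_mul (measurable_fst.max measurable_snd) hψ (hf.mul_prod hg)

lemma integrable_tail_mul_setIntegral_Iio (hψ : Integrable ψ ρ) (hf : Integrable f μ)
    (hg : Integrable g ν) :
    Integrable (fun x => (∫ t in Ici x, ψ t ∂ρ) * f x * ∫ y in Iio x, g y ∂ν) μ := by
  simp only [← setIntegral_Iio_tail_max]
  exact integrable_setIntegral_section_left (measurableSet_lt measurable_snd measurable_fst)
    (integrable_setIntegral_Ici_max_mul hψ hf hg).integrableOn

lemma integrable_tail_mul_setIntegral_Iic (hψ : Integrable ψ ρ) (hf : Integrable f μ)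
    (hg : Integrable g ν) :
    Integrable (fun y => (∫ t in Ici y, ψ t ∂ρ) * g y * ∫ x in Iic y, f x ∂μ) ν := by
  simp only [← setIntegral_Iic_tail_max]
  exact integrable_setIntegral_section_right (measurableSet_le measurable_fst measurable_snd)
    (integrable_setIntegral_Ici_max_mul hψ hf hg).integrableOn

theorem integral_mul_setIntegral_Iic_mul_setIntegral_Iic (hψ : Integrable ψ ρ)
    (hf : Integrable f μ) (hg : Integrable g ν) :
    ∫ t, ψ t * ((∫ x in Iic t, f x ∂μ) * ∫ y in Iic t, g y ∂ν) ∂ρ =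
      (∫ x, (∫ t in Ici x, ψ t ∂ρ) * f x * ∫ y in Iio x, g y ∂ν ∂μ) +
        ∫ y, (∫ t in Ici y, ψ t ∂ρ) * g y * ∫ x in Iic y, f x ∂μ ∂ν := by
  have hH := integrable_setIntegral_Ici_max_mul hψ hf hg
  have hlt : MeasurableSet {z : α × α | z.2 < z.1} :=
    measurableSet_lt measurable_snd measurable_fst
  have hle : MeasurableSet {z : α × α | z.1 ≤ z.2} :=
    measurableSet_le measurable_fst measurable_snd
  have hcompl : {z : α × α | z.2 < z.1}ᶜ = {z | z.1 ≤ z.2} := by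
    ext z; exact not_lt
  have hsquare (t : α) : {z : α × α | max z.1 z.2 ≤ t} = Iic t ×ˢ Iic t := by
    ext z; exact max_le_iff
  calc ∫ t, ψ t * ((∫ x in Iic t, f x ∂μ) * ∫ y in Iic t, g y ∂ν) ∂ρ
      = ∫ t, ψ t * ∫ z in {z : α × α | max z.1 z.2 ≤ t}, f z.1 * g z.2 ∂(μ.prod ν) ∂ρ := by
        simp only [hsquare, setIntegral_prod_mul]
    _ = ∫ z, (∫ t in Ici (max z.1 z.2), ψ t ∂ρ) * (f z.1 * g z.2) ∂(μ.prod ν) :=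
        integral_mul_setIntegral_le (measurable_fst.max measurable_snd) hψ (hf.mul_prod hg)
    _ = (∫ z in {z | z.2 < z.1}, (∫ t in Ici (max z.1 z.2), ψ t ∂ρ) * (f z.1 * g z.2)
            ∂(μ.prod ν)) +
          ∫ z in {z | z.1 ≤ z.2}, (∫ t in Ici (max z.1 z.2), ψ t ∂ρ) * (f z.1 * g z.2)
            ∂(μ.prod ν) := by
        rw [← hcompl, integral_add_compl hlt hH]
    _ = _ := by
        rw [setIntegral_prod_eq_integral_section_left hlt hH.integrableOn,
          setIntegral_prod_eq_integral_section_right hle hH.integrableOn]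
        exact congrArg₂ (· + ·) (integral_congr_ae (ae_of_all _ setIntegral_Iio_tail_max))
          (integral_congr_ae (ae_of_all _ setIntegral_Iic_tail_max))

end CumulativeIntegrals

lemma tendsto_setIntegral_of_forall_eventually_mem_iff {ι X E : Type*} [MeasurableSpace X]
    [NormedAddCommGroup E] [NormedSpace ℝ E] {μ : Measure X} {w : X → E} {l : Filter ι}
    [l.IsCountablyGenerated] {S : ι → Set X} {T : Set X} (hw : Integrable w μ)
    (hS : ∀ i, MeasurableSet (S i)) (hT : MeasurableSet T)
    (hST : ∀ x, ∀ᶠ i in l, x ∈ S i ↔ x ∈ T) :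
    Tendsto (fun i => ∫ x in S i, w x ∂μ) l (𝓝 (∫ x in T, w x ∂μ)) := by
  classical
  simp_rw [← integral_indicator (hS _), ← integral_indicator hT]
  refine tendsto_integral_filter_of_dominated_convergence (fun x => ‖w x‖)
    (Eventually.of_forall fun i => hw.aestronglyMeasurable.indicator (hS i))
    (Eventually.of_forall fun i => ae_of_all _ fun x => norm_indicator_le_norm_self _ _)
    hw.norm (ae_of_all _ fun x => tendsto_const_nhds.congr' ?_)
  filter_upwards [hST x] with i hi
  simp only [indicator_apply, hi]

lemma setIntegral_update_add_dirac {X E : Type*} [MeasurableSpace X] [MeasurableSingletonClass X]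
    [DecidableEq X] [NormedAddCommGroup E] [NormedSpace ℝ E] [CompleteSpace E] {μ : Measure X}
    {w : X → E} {a : X} {S : Set X} (hw : Integrable w μ) (ha : μ {a} = 0) (haS : a ∈ S) (c : E) :
    ∫ x in S, update w a c x ∂(μ + Measure.dirac a) = c + ∫ x in S, w x ∂μ := by
  classical
  have hae : update w a c =ᵐ[μ] w := by
    filter_upwards [measure_eq_zero_iff_ae_notMem.1 ha] with x hx
    exact update_of_ne hx c w
  have hdirac : Integrable (update w a c) ((Measure.dirac a).restrict S) :=
    (integrable_dirac enorm_lt_top).restrict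
  rw [Measure.restrict_add,
    integral_add_measure (hw.congr hae.symm).integrableOn hdirac,
    integral_congr_ae (ae_restrict_of_ae hae), setIntegral_dirac, if_pos haS, update_self, add_comm]

section CompactlySupported

variable {E : Type*} [NormedAddCommGroup E] [NormedSpace ℝ E] {φ : ℝ → E}

lemma setIntegral_Ici_deriv_of_hasCompactSupport [CompleteSpace E] (hφ : ContDiff ℝ 1 φ)
    (hφc : HasCompactSupport φ) (x : ℝ) : ∫ t in Ici x, deriv φ t = -φ x :=
  integral_Ici_eq_integral_Ioi.trans (hφc.integral_Ioi_deriv_eq hφ x)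

lemma integrable_deriv_of_hasCompactSupport (hφ : ContDiff ℝ 1 φ) (hφc : HasCompactSupport φ) :
    Integrable (deriv φ) :=
  (hφ.continuous_deriv le_rfl).integrable_of_hasCompactSupport hφc.deriv

end CompactlySupported

/-- On `U`, the function `F` is a primitive of the measure `w μ` vanishing at `-∞`, with each atom
of `w μ` charged from either side of its location: `F` is an unnormalized distribution function. -/
structure IsStieltjesPrimitiveOn {α E : Type*} [Preorder α] [MeasurableSpace α]
    [NormedAddCommGroup E] [NormedSpace ℝ E] (F w : α → E) (μ : Measure α) (U : Set α) : Prop where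
  integrable : Integrable w μ
  eq_or_eq : ∀ t ∈ U, F t = ∫ x in Iio t, w x ∂μ ∨ F t = ∫ x in Iic t, w x ∂μ

namespace IsStieltjesPrimitiveOn

section LinearOrder

variable {α E : Type*} [LinearOrder α] [TopologicalSpace α] [MeasurableSpace α]
  [OpensMeasurableSpace α] [NormedAddCommGroup E] [NormedSpace ℝ E]
  {F w : α → E} {μ : Measure α} {U : Set α} {a t : α}

lemma const_add [OrderClosedTopology α] [CompleteSpace E] (hF : IsStieltjesPrimitiveOn F w μ U)
    (hU : U ⊆ Ioi a) (ha : μ {a} = 0) (c : E) :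
    IsStieltjesPrimitiveOn (fun t => c + F t) (update w a c) (μ + Measure.dirac a) U where
  integrable := by
    refine .add_measure (hF.integrable.congr ?_) (integrable_dirac enorm_lt_top)
    filter_upwards [measure_eq_zero_iff_ae_notMem.1 ha] with x hx
    exact (update_of_ne hx c w).symm
  eq_or_eq t ht := by
    have hat : a < t := hU ht
    rw [setIntegral_update_add_dirac hF.integrable ha (mem_Iio.2 hat),
      setIntegral_update_add_dirac hF.integrable ha (mem_Iic.2 hat.le)]
    exact (hF.eq_or_eq t ht).imp (congrArg (c + ·)) (congrArg (c + ·))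

lemma ae_eq_setIntegral_Iic [OrderClosedTopology α] [SFinite μ] {ρ : Measure α}
    [NullSingletonClass ρ] (hF : IsStieltjesPrimitiveOn F w μ U) :
    ∀ᵐ t ∂ρ, t ∈ U → F t = ∫ x in Iic t, w x ∂μ := by
  have hatoms : {t | 0 < μ {t}}.Countable := Measure.countable_meas_level_set_pos measurable_id
  filter_upwards [hatoms.ae_notMem ρ] with t ht htU
  have hμt : μ {t} = 0 := by simpa using ht
  simpa only [integral_Iic_eq_integral_Iio' hμt, or_self] using hF.eq_or_eq t htU

lemma exists_halfLine [OrderClosedTopology α] (hF : IsStieltjesPrimitiveOn F w μ U) :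
    ∃ S : α → Set α, (∀ t, S t = Iio t ∨ S t = Iic t) ∧ (∀ t, MeasurableSet (S t)) ∧
      ∀ t ∈ U, F t = ∫ x in S t, w x ∂μ := by
  have hpointwise (t : α) : ∃ S, (S = Iio t ∨ S = Iic t) ∧ (t ∈ U → F t = ∫ x in S, w x ∂μ) := by
    by_cases ht : t ∈ U
    · rcases hF.eq_or_eq t ht with h | h
      exacts [⟨_, .inl rfl, fun _ => h⟩, ⟨_, .inr rfl, fun _ => h⟩]
    · exact ⟨_, .inl rfl, fun h => absurd h ht⟩
  choose S hS hFS using hpointwise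
  refine ⟨S, hS, fun t => ?_, hFS⟩
  rcases hS t with h | h <;> rw [h]
  exacts [measurableSet_Iio, measurableSet_Iic]

variable [OrderTopology α] [FirstCountableTopology α]

lemma tendsto_nhdsGT (hF : IsStieltjesPrimitiveOn F w μ U) (hU : U ∈ 𝓝 t) :
    Tendsto F (𝓝[>] t) (𝓝 (∫ x in Iic t, w x ∂μ)) := by
  obtain ⟨S, hS, hSm, hFS⟩ := hF.exists_halfLine
  have hlim : Tendsto (fun u => ∫ x in S u, w x ∂μ) (𝓝[>] t) (𝓝 (∫ x in Iic t, w x ∂μ)) := by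
    refine tendsto_setIntegral_of_forall_eventually_mem_iff hF.integrable hSm measurableSet_Iic
      fun x => ?_
    rcases le_or_gt x t with hx | hx
    · filter_upwards [self_mem_nhdsWithin] with u (hu : t < u)
      rcases hS u with h | h <;> rw [h]
      exacts [iff_of_true (hx.trans_lt hu) hx, iff_of_true (hx.trans hu.le) hx]
    · filter_upwards [nhdsWithin_le_nhds (Iio_mem_nhds hx)] with u (hu : u < x)
      rcases hS u with h | h <;> rw [h]
      exacts [iff_of_false hu.not_gt hx.not_ge, iff_of_false hu.not_ge hx.not_ge]
  refine hlim.congr' ?_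
  filter_upwards [nhdsWithin_le_nhds hU] with u hu using (hFS u hu).symm

lemma tendsto_nhdsLT (hF : IsStieltjesPrimitiveOn F w μ U) (hU : U ∈ 𝓝 t) :
    Tendsto F (𝓝[<] t) (𝓝 (∫ x in Iio t, w x ∂μ)) := by
  obtain ⟨S, hS, hSm, hFS⟩ := hF.exists_halfLine
  have hlim : Tendsto (fun u => ∫ x in S u, w x ∂μ) (𝓝[<] t) (𝓝 (∫ x in Iio t, w x ∂μ)) := by
    refine tendsto_setIntegral_of_forall_eventually_mem_iff hF.integrable hSm measurableSet_Iio
      fun x => ?_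
    rcases lt_or_ge x t with hx | hx
    · filter_upwards [nhdsWithin_le_nhds (Ioi_mem_nhds hx)] with u (hu : x < u)
      rcases hS u with h | h <;> rw [h]
      exacts [iff_of_true hu hx, iff_of_true hu.le hx]
    · filter_upwards [self_mem_nhdsWithin] with u (hu : u < t)
      rcases hS u with h | h <;> rw [h]
      exacts [iff_of_false (hu.trans_le hx).not_gt hx.not_gt,
        iff_of_false (hu.trans_le hx).not_ge hx.not_gt]
  refine hlim.congr' ?_
  filter_upwards [nhdsWithin_le_nhds hU] with u hu using (hFS u hu).symm

lemma rightLim_eq [(𝓝[>] t).NeBot] (hF : IsStieltjesPrimitiveOn F w μ U) (hU : U ∈ 𝓝 t) :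
    rightLim F t = ∫ x in Iic t, w x ∂μ :=
  rightLim_eq_of_tendsto (hF.tendsto_nhdsGT hU)

lemma leftLim_eq [(𝓝[<] t).NeBot] (hF : IsStieltjesPrimitiveOn F w μ U) (hU : U ∈ 𝓝 t) :
    leftLim F t = ∫ x in Iio t, w x ∂μ :=
  leftLim_eq_of_tendsto (hF.tendsto_nhdsLT hU)

end LinearOrder

section ProductRule

variable {𝕜 : Type*} [RCLike 𝕜] {F G f g φ : ℝ → 𝕜} {μ ν : Measure ℝ} {U : Set ℝ}

lemma mul_leftLim_eq (hG : IsStieltjesPrimitiveOn G g ν U) (hU : IsOpen U)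
    (hφU : tsupport φ ⊆ U) (x : ℝ) :
    φ x * leftLim G x * f x = φ x * f x * ∫ y in Iio x, g y ∂ν := by
  by_cases hx : x ∈ tsupport φ
  · rw [hG.leftLim_eq (hU.mem_nhds (hφU hx)), mul_right_comm]
  · simp only [image_eq_zero_of_notMem_tsupport hx, zero_mul]

lemma mul_rightLim_eq (hF : IsStieltjesPrimitiveOn F f μ U) (hU : IsOpen U)
    (hφU : tsupport φ ⊆ U) (y : ℝ) :
    φ y * rightLim F y * g y = φ y * g y * ∫ x in Iic y, f x ∂μ := by
  by_cases hy : y ∈ tsupport φ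
  · rw [hF.rightLim_eq (hU.mem_nhds (hφU hy)), mul_right_comm]
  · simp only [image_eq_zero_of_notMem_tsupport hy, zero_mul]

variable [SFinite μ] [SFinite ν]

lemma integrable_mul_leftLim (hG : IsStieltjesPrimitiveOn G g ν U) (hf : Integrable f μ)
    (hU : IsOpen U) (hφ : ContDiff ℝ 1 φ) (hφc : HasCompactSupport φ) (hφU : tsupport φ ⊆ U) :
    Integrable (fun x => φ x * leftLim G x * f x) μ := by
  have h := (integrable_tail_mul_setIntegral_Iio
    (integrable_deriv_of_hasCompactSupport hφ hφc) hf hG.integrable).neg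
  refine h.congr (ae_of_all _ fun x => ?_)
  simp only [Pi.neg_apply, setIntegral_Ici_deriv_of_hasCompactSupport hφ hφc, neg_mul, neg_neg,
    mul_leftLim_eq hG hU hφU]

lemma integrable_mul_rightLim (hF : IsStieltjesPrimitiveOn F f μ U) (hg : Integrable g ν)
    (hU : IsOpen U) (hφ : ContDiff ℝ 1 φ) (hφc : HasCompactSupport φ) (hφU : tsupport φ ⊆ U) :
    Integrable (fun y => φ y * rightLim F y * g y) ν := by
  have h := (integrable_tail_mul_setIntegral_Iic
    (integrable_deriv_of_hasCompactSupport hφ hφc) hF.integrable hg).neg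
  refine h.congr (ae_of_all _ fun y => ?_)
  simp only [Pi.neg_apply, setIntegral_Ici_deriv_of_hasCompactSupport hφ hφc, neg_mul, neg_neg,
    mul_rightLim_eq hF hU hφU]

theorem integral_deriv_mul_mul (hF : IsStieltjesPrimitiveOn F f μ U)
    (hG : IsStieltjesPrimitiveOn G g ν U) (hU : IsOpen U) (hφ : ContDiff ℝ 1 φ)
    (hφc : HasCompactSupport φ) (hφU : tsupport φ ⊆ U) :
    ∫ t, deriv φ t * (F t * G t) =
      -(∫ x, φ x * leftLim G x * f x ∂μ) - ∫ y, φ y * rightLim F y * g y ∂ν := by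
  calc ∫ t, deriv φ t * (F t * G t)
      = ∫ t, deriv φ t * ((∫ x in Iic t, f x ∂μ) * ∫ y in Iic t, g y ∂ν) := by
        refine integral_congr_ae ?_
        filter_upwards [hF.ae_eq_setIntegral_Iic, hG.ae_eq_setIntegral_Iic] with t hFt hGt
        by_cases ht : t ∈ tsupport (deriv φ)
        · have htU : t ∈ U := hφU (tsupport_deriv_subset ht)
          rw [hFt htU, hGt htU]
        · simp only [image_eq_zero_of_notMem_tsupport ht, zero_mul]
    _ = (∫ x, (∫ t in Ici x, deriv φ t) * f x * ∫ y in Iio x, g y ∂ν ∂μ) +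
          ∫ y, (∫ t in Ici y, deriv φ t) * g y * ∫ x in Iic y, f x ∂μ ∂ν :=
        integral_mul_setIntegral_Iic_mul_setIntegral_Iic
          (integrable_deriv_of_hasCompactSupport hφ hφc) hF.integrable hG.integrable
    _ = _ := by
        simp only [setIntegral_Ici_deriv_of_hasCompactSupport hφ hφc, neg_mul, integral_neg,
          ← sub_eq_add_neg, mul_leftLim_eq hG hU hφU, mul_rightLim_eq hF hU hφU]

end ProductRule

end IsStieltjesPrimitiveOn

namespace NormBV0

variable {P : NormBV0} {S : Set ℝ} {h k : ℝ → ℝ} {r t : ℝ}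

/-- The total variation measure `|ν|` of the signed measure `ν = νp - νm`. -/
noncomputable def absMeasure (P : NormBV0) : Measure ℝ := P.νp + P.νm

open scoped Classical in
/-- The density `dν / d|ν|` of the signed measure with respect to its total variation: `-1` on a
set carrying `νm` and `1` on its complement, which carries `νp`. -/
noncomputable def sign (P : NormBV0) : ℝ → ℝ :=
  P.sing.nullSet.piecewise (fun _ => -1) fun _ => 1

lemma measurable_sign : Measurable P.sign :=
  measurable_const.piecewise P.sing.measurableSet_nullSet measurable_const

lemma norm_sign_le (x : ℝ) : ‖P.sign x‖ ≤ 1 := by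
  by_cases hx : x ∈ P.sing.nullSet <;> simp [sign, hx]

lemma ae_sign_eq_one : ∀ᵐ x ∂P.νp, P.sign x = 1 := by
  filter_upwards [measure_eq_zero_iff_ae_notMem.1 P.sing.measure_nullSet] with x hx
  classical exact piecewise_eq_of_notMem _ _ _ hx

lemma ae_sign_eq_neg_one : ∀ᵐ x ∂P.νm, P.sign x = -1 := by
  filter_upwards [measure_eq_zero_iff_ae_notMem.1 P.sing.measure_compl_nullSet] with x hx
  classical exact piecewise_eq_of_mem _ _ _ (not_not.1 hx)

lemma integ_eq_setIntegral_sign_mul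
    (hh : IntegrableOn (fun x => P.sign x * h x) S P.absMeasure) :
    P.integ S h = ∫ x in S, P.sign x * h x ∂P.absMeasure := by
  have hp : ∫ x in S, P.sign x * h x ∂P.νp = ∫ x in S, h x ∂P.νp := by
    refine integral_congr_ae ?_
    filter_upwards [ae_restrict_of_ae P.ae_sign_eq_one] with x hx
    rw [hx, one_mul]
  have hm : ∫ x in S, P.sign x * h x ∂P.νm = -∫ x in S, h x ∂P.νm := by
    rw [← integral_neg]
    refine integral_congr_ae ?_
    filter_upwards [ae_restrict_of_ae P.ae_sign_eq_neg_one] with x hx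
    rw [hx, neg_one_mul]
  obtain ⟨hhp, hhm⟩ := integrableOn_add_measure.1 hh
  rw [absMeasure, Measure.restrict_add, integral_add_measure hhp hhm, hp, hm, ← sub_eq_add_neg,
    integ]

lemma absMeasure_Icc_lt_top (hr : r < 1) : P.absMeasure (Icc (-r) r) < ⊤ := by
  have hK : Icc (-r) r ⊆ Ioo (-1 : ℝ) 1 := Icc_subset_Ioo (neg_lt_neg hr) hr
  exact ENNReal.add_lt_top.2 ⟨(P.locfin_p _ isCompact_Icc hK).lt_top,
    (P.locfin_m _ isCompact_Icc hK).lt_top⟩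

lemma absMeasure_singleton_zero : P.absMeasure {0} = 0 := by
  rw [absMeasure, Measure.add_apply, P.zero_p, P.zero_m, add_zero]

lemma integrableOn_sign_mul_id (hr : r < 1) :
    IntegrableOn (fun x => P.sign x * x) (Icc (-r) r) P.absMeasure := by
  refine Measure.integrableOn_of_bounded (M := r) (absMeasure_Icc_lt_top hr).ne
    (measurable_sign.mul measurable_id).aestronglyMeasurable ?_
  filter_upwards [ae_restrict_mem measurableSet_Icc] with x hx
  rw [norm_mul]
  exact (mul_le_of_le_one_left (norm_nonneg _) (norm_sign_le x)).trans (abs_le.2 hx)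

lemma R_eq_sub_setIntegral (ht : t ∈ Ico 0 1) :
    P.R t = P.R 0 - ∫ s in Ioc 0 t, P.sign s * s ∂P.absMeasure := by
  rw [P.fund_pos t ht, ← integ_eq_setIntegral_sign_mul, integ]
  exact (integrableOn_sign_mul_id ht.2).mono_set fun s hs => ⟨by linarith [ht.1, hs.1], hs.2⟩

lemma R_eq_add_setIntegral (ht : t ∈ Ioc (-1) 0) :
    P.R t = P.R 0 + ∫ s in Ico t 0, P.sign s * s ∂P.absMeasure := by
  rw [P.fund_neg t ht, ← integ_eq_setIntegral_sign_mul, integ]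
  exact (integrableOn_sign_mul_id (neg_lt.1 ht.1)).mono_set
    fun s hs => ⟨by linarith [hs.1], by linarith [ht.2, hs.2]⟩

lemma exists_isStieltjesPrimitiveOn_sub_const (P : NormBV0) (hr : r < 1) :
    ∃ c, IsStieltjesPrimitiveOn (fun t => P.R t - c) (fun x => -(P.sign x * x))
      (P.absMeasure.restrict (Icc (-r) r)) (Ioo (-r) r) := by
  set μ := P.absMeasure.restrict (Icc (-r) r)
  have hw : Integrable (fun x => -(P.sign x * x)) μ := (integrableOn_sign_mul_id hr).neg
  have hμ {S : Set ℝ} (hS : S ⊆ Icc (-r) r) :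
      ∫ x in S, -(P.sign x * x) ∂μ = -∫ x in S, P.sign x * x ∂P.absMeasure := by
    rw [Measure.restrict_restrict_of_subset hS, integral_neg]
  have hμ0 : μ {0} = 0 := Measure.restrict_le_self.absolutelyContinuous absMeasure_singleton_zero
  refine ⟨P.R 0 - ∫ x in Iic 0, -(P.sign x * x) ∂μ, hw, fun t ht => ?_⟩
  rcases le_or_gt 0 t with h0 | h0
  · right
    rw [← Iic_union_Ioc_eq_Iic h0, setIntegral_union (Iic_disjoint_Ioc le_rfl) measurableSet_Ioc
      hw.integrableOn hw.integrableOn, R_eq_sub_setIntegral ⟨h0, ht.2.trans hr⟩,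
      hμ (S := Ioc 0 t) fun x hx => ⟨by linarith [hx.1, ht.2], hx.2.trans ht.2.le⟩]
    ring
  · left
    rw [integral_Iic_eq_integral_Iio' hμ0, ← Iio_union_Ico_eq_Iio h0.le,
      setIntegral_union ((Iio_disjoint_Ici le_rfl).mono_right Ico_subset_Ici_self)
        measurableSet_Ico hw.integrableOn hw.integrableOn,
      R_eq_add_setIntegral ⟨by linarith [ht.1], h0.le⟩,
      hμ (S := Ico t 0) fun x hx => ⟨ht.1.le.trans hx.1, by linarith [hx.2, ht.1]⟩]
    ring

lemma integ_mul_id_eq_neg_setIntegral (hr : r < 1) (hk : ∀ x ∉ Icc (-r) r, k x = 0)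
    (hki : IntegrableOn (fun x => k x * -(P.sign x * x)) (Icc (-r) r) P.absMeasure) :
    P.integ (Ioo (-1) 1) (fun x => k x * x) =
      -∫ x in Icc (-r) r, k x * -(P.sign x * x) ∂P.absMeasure := by
  have hsub : Icc (-r) r ⊆ Ioo (-1 : ℝ) 1 := Icc_subset_Ioo (neg_lt_neg hr) hr
  have hk0 : ∀ x ∈ Ioo (-1) 1 \ Icc (-r) r, P.sign x * (k x * x) = 0 := fun x hx => by
    rw [hk x hx.2, zero_mul, mul_zero]
  have hneg : (fun x => k x * -(P.sign x * x)) = fun x => -(P.sign x * (k x * x)) := by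
    ext x; ring
  rw [hneg] at hki ⊢
  rw [integral_neg, neg_neg, integ_eq_setIntegral_sign_mul,
    setIntegral_eq_of_subset_of_forall_sdiff_eq_zero measurableSet_Ioo hsub hk0]
  exact IntegrableOn.of_forall_sdiff_eq_zero (integrable_neg_iff.1 hki) measurableSet_Ioo hk0

theorem exists_isStieltjesPrimitiveOn (P : NormBV0) (hr : r < 1) :
    ∃ (μ : Measure ℝ) (w : ℝ → ℝ), IsFiniteMeasure μ ∧
      IsStieltjesPrimitiveOn P.R w μ (Ioo (-r) r) ∧
      ∀ k : ℝ → ℝ, (∀ x ∉ Ioo (-r) r, k x = 0) → Integrable (fun x => k x * w x) μ →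
        P.integ (Ioo (-1) 1) (fun x => k x * x) = -∫ x, k x * w x ∂μ := by
  obtain ⟨c, hc⟩ := P.exists_isStieltjesPrimitiveOn_sub_const hr
  have hUa : Ioo (-r) r ⊆ Ioi (-1) := fun x hx => (neg_lt_neg hr).trans hx.1
  have ha : P.absMeasure.restrict (Icc (-r) r) {-1} = 0 := by
    rw [Measure.restrict_apply (measurableSet_singleton _), singleton_inter_eq_empty.2,
      measure_empty]
    exact fun h => by linarith [h.1]
  have : IsFiniteMeasure (P.absMeasure.restrict (Icc (-r) r)) :=
    isFiniteMeasure_restrict.2 (absMeasure_Icc_lt_top hr).ne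
  refine ⟨_, _, inferInstance,
    by simpa only [add_sub_cancel] using hc.const_add hUa ha c, fun k hk hki => ?_⟩
  have hka : k (-1) = 0 := hk _ fun h => lt_irrefl (-1 : ℝ) (hUa h)
  have hkw : (fun x => k x * update (fun x => -(P.sign x * x)) (-1) c x) =
      fun x => k x * -(P.sign x * x) := by
    ext x
    rcases eq_or_ne x (-1) with rfl | hx
    · rw [hka, zero_mul, zero_mul]
    · rw [update_of_ne hx]
  rw [hkw] at hki ⊢
  rw [integral_add_measure hki.left_of_add_measure hki.right_of_add_measure, integral_dirac, hka,
    zero_mul, add_zero]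
  exact integ_mul_id_eq_neg_setIntegral hr (fun x hx => hk x fun h => hx (Ioo_subset_Icc_self h))
    hki.left_of_add_measure

end NormBV0

lemma exists_lt_subset_Ioo_neg {K : Set ℝ} {a : ℝ} (hK : IsClosed K) (hKa : K ⊆ Ioo (-a) a) :
    ∃ r < a, K ⊆ Ioo (-r) r := by
  have hball (r : ℝ) : Metric.ball 0 r = Ioo (-r) r := by rw [Real.ball_eq_Ioo, zero_sub, zero_add]
  simp only [← hball] at hKa ⊢
  exact exists_lt_subset_ball hK hKa

theorem NormBV0.integral_deriv_mul_eq_leftLim_rightLim (P Q : NormBV0) {φ : ℝ → ℝ}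
    (hφ : ContDiff ℝ 1 φ) (hφc : HasCompactSupport φ) (hφs : tsupport φ ⊆ Ioo (-1 : ℝ) 1) :
    (∫ t in Ioo (-1 : ℝ) 1, deriv φ t * (P.R t * Q.R t)) =
      P.integ (Ioo (-1 : ℝ) 1) (fun t => φ t * t * leftLim Q.R t) +
        Q.integ (Ioo (-1 : ℝ) 1) (fun t => φ t * t * rightLim P.R t) := by
  obtain ⟨r, hr, hφr⟩ := exists_lt_subset_Ioo_neg (isClosed_tsupport φ) hφs
  obtain ⟨μ, f, _, hP, hPinteg⟩ := P.exists_isStieltjesPrimitiveOn hr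
  obtain ⟨ν, g, _, hQ, hQinteg⟩ := Q.exists_isStieltjesPrimitiveOn hr
  have hφ0 (F : ℝ → ℝ) : ∀ x ∉ Ioo (-r) r, φ x * F x = 0 := fun x hx => by
    rw [image_eq_zero_of_notMem_tsupport fun h => hx (hφr h), zero_mul]
  have hL := hQ.integrable_mul_leftLim hP.integrable isOpen_Ioo hφ hφc hφr
  have hR := hP.integrable_mul_rightLim hQ.integrable isOpen_Ioo hφ hφc hφr
  have hprod := hP.integral_deriv_mul_mul hQ isOpen_Ioo hφ hφc hφr
  have hvanish : ∀ t ∉ Ioo (-1 : ℝ) 1, deriv φ t * (P.R t * Q.R t) = 0 := fun t ht => by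
    rw [image_eq_zero_of_notMem_tsupport fun h => ht (hφs (tsupport_deriv_subset h)), zero_mul]
  have hcomm (F : ℝ → ℝ) : (fun t => φ t * t * F t) = fun t => φ t * F t * t :=
    funext fun t => mul_right_comm _ _ _
  rw [setIntegral_eq_integral_of_forall_compl_eq_zero hvanish, hprod, hcomm, hcomm,
    hPinteg _ (hφ0 _) hL, hQinteg _ (hφ0 _) hR, sub_eq_add_neg]

/-- Integration-by-parts identity for the product of two normalized
BV₀ pairs against a compactly supported `C¹` test function. -/
theorem bv0_product_rule (P Q : NormBV0) (φ : ℝ → ℝ) (hφ : ContDiff ℝ 1 φ)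
    (hφc : HasCompactSupport φ) (hφs : tsupport φ ⊆ Set.Ioo (-1 : ℝ) 1) :
    (∫ t in Set.Ioo (-1 : ℝ) 1, deriv φ t * (P.R t * Q.R t)) =
        P.integ (Set.Ioo (-1 : ℝ) 1) (fun t => φ t * t * Function.leftLim Q.R t) +
          Q.integ (Set.Ioo (-1 : ℝ) 1) (fun t => φ t * t * Function.rightLim P.R t) ∧
    (∫ t in Set.Ioo (-1 : ℝ) 1, deriv φ t * (P.R t * Q.R t)) =
        P.integ (Set.Ioo (-1 : ℝ) 1) (fun t => φ t * t * Function.rightLim Q.R t) +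
          Q.integ (Set.Ioo (-1 : ℝ) 1) (fun t => φ t * t * Function.leftLim P.R t) := by
  refine ⟨P.integral_deriv_mul_eq_leftLim_rightLim Q hφ hφc hφs, ?_⟩
  rw [add_comm]
  simpa only [mul_comm (Q.R _)] using Q.integral_deriv_mul_eq_leftLim_rightLim P hφ hφc hφs
end

section
/- Let (R, ν) be a normalized BV₀ pair on (−1,1) and let f : (−1,1) → ℝ be continuous. Then the transform T_{R,ν}f is continuous on (−1,1). -/
open MeasureTheory Set Filter Function Topology

/-!
The two formulas for `R` turn the transform into
`T f t = R 0 * f t + ∫ s in 0..t, (t * f s - s * f t) dν(s)`. An integral with moving endpoint `t`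
may jump at the atoms of `ν`, but this integrand vanishes at `s = t`, which removes the jumps.
-/

section ParametricIntegral

variable {E : Type*} [NormedAddCommGroup E] [NormedSpace ℝ E]

theorem continuousOn_setIntegral_of_subset_isCompact {X Y : Type*} [TopologicalSpace X]
    [TopologicalSpace Y] [T2Space Y] [MeasurableSpace Y] [BorelSpace Y] {μ : Measure Y}
    {f : X → Y → E} {s : Set X} {S K : Set Y} (hK : IsCompact K) (hSK : S ⊆ K) (hμS : μ S ≠ ⊤)
    (hf : ContinuousOn (uncurry f) (s ×ˢ K)) :
    ContinuousOn (fun x => ∫ y in S, f x y ∂μ) s := by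
  -- Over the subtype `K` the integrand is continuous everywhere, as the library lemma requires.
  have : CompactSpace K := isCompact_iff_compactSpace.1 hK
  have : IsFiniteMeasure (μ.restrict S) := isFiniteMeasure_restrict.2 hμS
  have hfK : ContinuousOn (uncurry fun x (y : K) => f x y) (s ×ˢ univ) :=
    hf.comp (f := fun p : X × K => (p.1, (p.2 : Y))) (by fun_prop) fun p hp => ⟨hp.1, p.2.2⟩
  refine (continuousOn_integral_of_compact_support (μ := (μ.restrict S).comap ((↑) : K → Y))
    isCompact_univ hfK fun _ y _ hy => absurd (mem_univ y) hy).congr fun x _ => ?_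
  beta_reduce
  rw [integral_subtype_comap hK.measurableSet (f x), Measure.restrict_restrict hK.measurableSet,
    inter_eq_right.2 hSK]

variable {μ : Measure ℝ} {k : ℝ → ℝ → E} {a b c t : ℝ}

/-- The point is that the domains on the right do not depend on `t`: on the parts by which they
exceed `c..t`, the integrands are diagonal values of `k`. -/
theorem intervalIntegral_eq_setIntegral_max_sub_setIntegral_min
    (hdiag : ∀ s ∈ Icc a b, k s s = 0) (hc : c ∈ Icc a b) (ht : t ∈ Icc a b) :
    ∫ s in c..t, k t s ∂μ =
      (∫ s in Ioc c b, k (max t s) s ∂μ) - ∫ s in Ioc a c, k (min t s) s ∂μ := by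
  have hmax : ∫ s in Ioc c b, k (max t s) s ∂μ = ∫ s in Ioc c t, k t s ∂μ := by
    rw [setIntegral_eq_of_subset_of_forall_sdiff_eq_zero measurableSet_Ioc
      (Ioc_subset_Ioc_right ht.2)]
    · exact setIntegral_congr_fun measurableSet_Ioc fun s hs => by rw [max_eq_left hs.2]
    · rintro s ⟨hs, hst⟩
      have hts : t ≤ s := le_of_not_ge fun h => hst ⟨hs.1, h⟩
      rw [max_eq_right hts, hdiag s ⟨hc.1.trans hs.1.le, hs.2⟩]
  have hmin : ∫ s in Ioc a c, k (min t s) s ∂μ = ∫ s in Ioc t c, k t s ∂μ := by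
    rw [setIntegral_eq_of_subset_of_forall_sdiff_eq_zero measurableSet_Ioc
      (Ioc_subset_Ioc_left ht.1)]
    · exact setIntegral_congr_fun measurableSet_Ioc fun s hs => by rw [min_eq_left hs.1.le]
    · rintro s ⟨hs, hst⟩
      have hts : s ≤ t := le_of_not_gt fun h => hst ⟨h, hs.2⟩
      rw [min_eq_right hts, hdiag s ⟨hs.1.le, hs.2.trans hc.2⟩]
  rw [hmax, hmin, intervalIntegral]

theorem continuousOn_Icc_intervalIntegral_of_diag_eq_zero (hμ : μ (Icc a b) ≠ ⊤)
    (hk : ContinuousOn (uncurry k) (Icc a b ×ˢ Icc a b)) (hdiag : ∀ s ∈ Icc a b, k s s = 0)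
    (hc : c ∈ Icc a b) : ContinuousOn (fun t => ∫ s in c..t, k t s ∂μ) (Icc a b) := by
  have hmax : ContinuousOn (uncurry fun t s => k (max t s) s) (Icc a b ×ˢ Icc a b) :=
    hk.comp (f := fun p : ℝ × ℝ => (max p.1 p.2, p.2)) (by fun_prop) fun p hp =>
      ⟨⟨le_max_of_le_left hp.1.1, max_le hp.1.2 hp.2.2⟩, hp.2⟩
  have hmin : ContinuousOn (uncurry fun t s => k (min t s) s) (Icc a b ×ˢ Icc a b) :=
    hk.comp (f := fun p : ℝ × ℝ => (min p.1 p.2, p.2)) (by fun_prop) fun p hp =>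
      ⟨⟨le_min hp.1.1 hp.2.1, min_le_of_left_le hp.1.2⟩, hp.2⟩
  have hcb : Ioc c b ⊆ Icc a b := (Ioc_subset_Ioc_left hc.1).trans Ioc_subset_Icc_self
  have hac : Ioc a c ⊆ Icc a b := (Ioc_subset_Ioc_right hc.2).trans Ioc_subset_Icc_self
  refine ContinuousOn.congr (.sub ?_ ?_) fun t ht =>
    intervalIntegral_eq_setIntegral_max_sub_setIntegral_min hdiag hc ht
  · exact continuousOn_setIntegral_of_subset_isCompact isCompact_Icc hcb
      (measure_ne_top_of_subset hcb hμ) hmax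
  · exact continuousOn_setIntegral_of_subset_isCompact isCompact_Icc hac
      (measure_ne_top_of_subset hac hμ) hmin

theorem continuousOn_Ioo_intervalIntegral_of_diag_eq_zero
    (hμ : ∀ K, IsCompact K → K ⊆ Ioo a b → μ K ≠ ⊤)
    (hk : ContinuousOn (uncurry k) (Ioo a b ×ˢ Ioo a b)) (hdiag : ∀ s ∈ Ioo a b, k s s = 0)
    (hc : c ∈ Ioo a b) : ContinuousOn (fun t => ∫ s in c..t, k t s ∂μ) (Ioo a b) := by
  intro t ht
  obtain ⟨a', haa', ha'⟩ := exists_between (lt_min hc.1 ht.1)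
  obtain ⟨b', hb', hb'b⟩ := exists_between (max_lt hc.2 ht.2)
  rw [lt_min_iff] at ha'
  rw [max_lt_iff] at hb'
  have hsub : Icc a' b' ⊆ Ioo a b := Icc_subset_Ioo haa' hb'b
  have hcont := continuousOn_Icc_intervalIntegral_of_diag_eq_zero
    (hμ _ isCompact_Icc hsub) (hk.mono (prod_mono hsub hsub)) (fun s hs => hdiag s (hsub hs))
    ⟨ha'.1.le, hb'.1.le⟩
  exact (hcont.continuousAt (Icc_mem_nhds ha'.2 hb'.2)).continuousWithinAt

theorem intervalIntegral_eq_neg_setIntegral_Ico {g : ℝ → E} (hab : a ≤ b) (ha : g a = 0)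
    (hb : μ {b} = 0) : ∫ s in b..a, g s ∂μ = -∫ s in Ico a b, g s ∂μ := by
  have hIco : ∫ s in Ico a b, g s ∂μ = ∫ s in Icc a b, g s ∂μ :=
    (integral_Icc_eq_integral_Ico' hb).symm
  have hIoc : ∫ s in Icc a b, g s ∂μ = ∫ s in Ioc a b, g s ∂μ :=
    setIntegral_eq_of_subset_of_forall_sdiff_eq_zero measurableSet_Icc Ioc_subset_Icc_self
      fun s hs => by rw [← hs.1.1.eq_of_not_lt fun h => hs.2 ⟨h, hs.1.2⟩, ha]
  rw [intervalIntegral.integral_of_ge hab, hIco, hIoc]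

end ParametricIntegral

theorem continuousOn_intervalIntegral_mul_sub_mul {μ : Measure ℝ} {f : ℝ → ℝ} {a b c : ℝ}
    (hμ : ∀ K, IsCompact K → K ⊆ Ioo a b → μ K ≠ ⊤) (hf : ContinuousOn f (Ioo a b))
    (hc : c ∈ Ioo a b) :
    ContinuousOn (fun t => ∫ s in c..t, (t * f s - s * f t) ∂μ) (Ioo a b) := by
  have hfst : ContinuousOn (fun p : ℝ × ℝ => f p.1) (Ioo a b ×ˢ Ioo a b) :=
    hf.comp continuousOn_fst fun _ hp => hp.1
  have hsnd : ContinuousOn (fun p : ℝ × ℝ => f p.2) (Ioo a b ×ˢ Ioo a b) :=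
    hf.comp continuousOn_snd fun _ hp => hp.2
  exact continuousOn_Ioo_intervalIntegral_of_diag_eq_zero hμ
    ((continuousOn_fst.mul hsnd).sub (continuousOn_snd.mul hfst)) (fun _ _ => sub_self _) hc

namespace NormBV0

variable {f : ℝ → ℝ} {t : ℝ}

theorem integ_const_mul_sub_mul_const (P : NormBV0) {S K : Set ℝ} (hK : IsCompact K)
    (hK_sub : K ⊆ Ioo (-1) 1) (hSK : S ⊆ K) (hf : ContinuousOn f K) (c d : ℝ) :
    P.integ S (fun s => c * f s - s * d) = c * P.integ S f - P.integ S (fun s => s) * d := by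
  have integral_eq {μ : Measure ℝ} (hμ : μ K ≠ ⊤) :
      ∫ s in S, (c * f s - s * d) ∂μ = c * (∫ s in S, f s ∂μ) - (∫ s in S, s ∂μ) * d := by
    have integrableOn {g : ℝ → ℝ} (hg : ContinuousOn g K) : IntegrableOn g S μ :=
      (hg.integrableOn_of_subset_isCompact hK hK.measurableSet subset_rfl hμ).mono_set hSK
    rw [integral_sub ((integrableOn hf).const_mul c)
      ((integrableOn (continuousOn_id' K)).mul_const d), integral_const_mul, integral_mul_const]
  rw [integ, integral_eq (P.locfin_p K hK hK_sub), integral_eq (P.locfin_m K hK hK_sub), integ,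
    integ]
  ring

theorem T_of_pos (P : NormBV0) (hf : ContinuousOn f (Ioo (-1) 1)) (h0 : 0 < t) (h1 : t < 1) :
    P.T f t = P.R 0 * f t + P.integ (Ioc 0 t) (fun s => t * f s - s * f t) := by
  have hsub : Icc 0 t ⊆ Ioo (-1) 1 := Icc_subset_Ioo neg_one_lt_zero h1
  have hR : P.R t = P.R 0 - P.integ (Ioc 0 t) (fun s => s) := P.fund_pos t ⟨h0.le, h1⟩
  rw [T, if_pos h0, hR, P.integ_const_mul_sub_mul_const isCompact_Icc hsub Ioc_subset_Icc_self
    (hf.mono hsub)]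
  ring

theorem T_of_nonpos (P : NormBV0) (hf : ContinuousOn f (Ioo (-1) 1)) (h1 : -1 < t) (h0 : t ≤ 0) :
    P.T f t = P.R 0 * f t - P.integ (Ico t 0) (fun s => t * f s - s * f t) := by
  have hsub : Icc t 0 ⊆ Ioo (-1) 1 := Icc_subset_Ioo h1 one_pos
  have hR : P.R t = P.R 0 + P.integ (Ico t 0) (fun s => s) := P.fund_neg t ⟨h1, h0⟩
  rw [T, if_neg h0.not_gt, hR, P.integ_const_mul_sub_mul_const isCompact_Icc hsub
    Ico_subset_Icc_self (hf.mono hsub)]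
  ring

theorem T_eq_add_intervalIntegral (P : NormBV0) (hf : ContinuousOn f (Ioo (-1) 1))
    (ht : t ∈ Ioo (-1) 1) :
    P.T f t = P.R 0 * f t + ((∫ s in 0..t, (t * f s - s * f t) ∂P.νp) -
      ∫ s in 0..t, (t * f s - s * f t) ∂P.νm) := by
  rcases lt_or_ge 0 t with h0 | h0
  · rw [P.T_of_pos hf h0 ht.2, integ, intervalIntegral.integral_of_le h0.le,
      intervalIntegral.integral_of_le h0.le]
  · have integral_eq_neg {μ : Measure ℝ} (hμ : μ {0} = 0) :
        ∫ s in 0..t, (t * f s - s * f t) ∂μ = -∫ s in Ico t 0, (t * f s - s * f t) ∂μ :=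
      intervalIntegral_eq_neg_setIntegral_Ico h0 (sub_self _) hμ
    rw [P.T_of_nonpos hf ht.1 h0, integ, integral_eq_neg P.zero_p, integral_eq_neg P.zero_m]
    ring

end NormBV0

/-- For a normalized BV₀ pair `(R,ν)` and a continuous function `f` on
`(-1,1)`, the transform `T_{R,ν} f` is continuous on `(-1,1)`. -/
theorem bv0_transform_continuousOn (P : NormBV0) (f : ℝ → ℝ)
    (hf : ContinuousOn f (Set.Ioo (-1 : ℝ) 1)) :
    ContinuousOn (P.T f) (Set.Ioo (-1 : ℝ) 1) := by
  have h0 : (0 : ℝ) ∈ Ioo (-1) 1 := ⟨neg_one_lt_zero, one_pos⟩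
  have hp := continuousOn_intervalIntegral_mul_sub_mul P.locfin_p hf h0
  have hm := continuousOn_intervalIntegral_mul_sub_mul P.locfin_m hf h0
  exact ((continuousOn_const.mul hf).add (hp.sub hm)).congr
    fun _ ht => P.T_eq_add_intervalIntegral hf ht
end

section
/- Let (R, ν_R) and (Q, ν_Q) be normalized BV₀ pairs on (−1,1), and let ν_{RQ} be the signed measure on (−1,1) with dν_{RQ}(t) = Q(t⁻) dν_R(t) + R(t⁺) dν_Q(t). Then (R·Q, ν_{RQ}) is a normalized BV₀ pair, and T_{RQ, ν_{RQ}} f = T_{R,ν_R}(T_{Q,ν_Q} f) = T_{Q,ν_Q}(T_{R,ν_R} f) for every continuous f : (−1,1) → ℝ. In particular, if inf_{t∈K} |R(t)| > 0 for every compact K ⊆ (−1,1), then T_{R,ν_R} is a bijection of the space of continuous functions on (−1,1) onto itself, with inverse T_{1/R, ν_{1/R}}, where dν_{1/R}(t) = −(R(t⁻)·R(t⁺))⁻¹ dν_R(t). -/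
open MeasureTheory Set Filter Function Topology

/-- The transform associated to the product pair `(R·Q, ν_{RQ})`, where
`dν_{RQ}(t) = Q(t⁻) dν_R(t) + R(t⁺) dν_Q(t)`. -/
noncomputable def NormBV0.Tprod (P Q : NormBV0) (f : ℝ → ℝ) (t : ℝ) : ℝ :=
  if 0 < t then
    P.R t * Q.R t * f t +
      t * (P.integ (Set.Ioc 0 t) (fun s => Function.leftLim Q.R s * f s) +
            Q.integ (Set.Ioc 0 t) (fun s => Function.rightLim P.R s * f s))
  else
    P.R t * Q.R t * f t -
      t * (P.integ (Set.Ico t 0) (fun s => Function.leftLim Q.R s * f s) +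
            Q.integ (Set.Ico t 0) (fun s => Function.rightLim P.R s * f s))

/-- The transform associated to the pair `(1/R, ν_{1/R})`, where
`dν_{1/R}(t) = -(R(t⁻)·R(t⁺))⁻¹ dν_R(t)`. -/
noncomputable def NormBV0.Tinv (P : NormBV0) (f : ℝ → ℝ) (t : ℝ) : ℝ :=
  if 0 < t then
    (P.R t)⁻¹ * f t +
      t * P.integ (Set.Ioc 0 t)
        (fun s => -((Function.leftLim P.R s * Function.rightLim P.R s)⁻¹) * f s)
  else
    (P.R t)⁻¹ * f t -
      t * P.integ (Set.Ico t 0)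
        (fun s => -((Function.leftLim P.R s * Function.rightLim P.R s)⁻¹) * f s)

/-!
Both signed measures are written as densities against one positive measure `μ`, the sum of their
total variations, so that a pair becomes a function `R` with `dR = -t h dμ`. Approximating by
Riemann–Stieltjes sums over uniform subdivisions of the segment from `0` to `t`, dominated
convergence gives the product and quotient rules for such primitives, where one factor is evaluated
at the end of each cell and the other at its beginning, that is, in the limit, without the mass of
the atom. The product density can be written `Q dν_R + R dν_Q + |t| μ{t} (dν_R/dμ) (dν_Q/dμ) dμ`,
which is symmetric in the two pairs. Applied to `R` and the primitive of `f dν_Q`, the product rule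
yields `T_R (T_Q f) = T_{RQ} f`, so the transforms commute. For the pair of `1/R` the product
density vanishes and the product function is `1`, so the two transforms are inverse to each other.
-/

/-- The half-open segment from `0` to `t`: it contains `t` but not `0`. At most one of the two
pieces is nonempty. -/
def seg (t : ℝ) : Set ℝ := Ioc 0 t ∪ Ico t 0

section Segments

variable {s t u x y : ℝ}

theorem seg_of_nonneg (ht : 0 ≤ t) : seg t = Ioc 0 t := by
  simp [seg, ht]

theorem seg_of_nonpos (ht : t ≤ 0) : seg t = Ico t 0 := by
  simp [seg, ht]

theorem measurableSet_seg : MeasurableSet (seg t) :=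
  measurableSet_Ioc.union measurableSet_Ico

theorem seg_zero : seg 0 = ∅ := by
  simp [seg]

theorem zero_notMem_seg : (0 : ℝ) ∉ seg t := by
  simp [seg]

theorem ne_zero_of_mem_seg (hs : s ∈ seg t) : s ≠ 0 :=
  fun h => zero_notMem_seg (h ▸ hs)

theorem self_mem_seg (ht : t ≠ 0) : t ∈ seg t := by
  rcases ht.lt_or_gt with h | h
  · exact Or.inr ⟨le_rfl, h⟩
  · exact Or.inl ⟨h, le_rfl⟩

theorem seg_subset_uIcc : seg t ⊆ uIcc 0 t := by
  rintro s (⟨h0, ht⟩ | ⟨ht, h0⟩)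
  · exact mem_uIcc.2 (Or.inl ⟨h0.le, ht⟩)
  · exact mem_uIcc.2 (Or.inr ⟨ht, h0.le⟩)

theorem seg_subset_seg (hs : s ∈ uIcc 0 t) : seg s ⊆ seg t := by
  rintro x (⟨h0, hx⟩ | ⟨hx, h0⟩)
  · rcases mem_uIcc.1 hs with h | h
    · exact Or.inl ⟨h0, hx.trans h.2⟩
    · linarith
  · rcases mem_uIcc.1 hs with h | h
    · linarith
    · exact Or.inr ⟨h.1.trans hx, h0⟩

theorem seg_subset_union (hu : u ∈ Icc s t) : seg u ⊆ seg s ∪ seg t := by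
  rintro x (⟨h0, hx⟩ | ⟨hx, h0⟩)
  · exact Or.inr (Or.inl ⟨h0, hx.trans hu.2⟩)
  · exact Or.inl (Or.inr ⟨hu.1.trans hx, h0⟩)

theorem pos_of_mem_seg (ht : 0 ≤ t) (hs : s ∈ seg t) : 0 < s :=
  (seg_of_nonneg ht ▸ hs).1

theorem neg_of_mem_seg (ht : t ≤ 0) (hs : s ∈ seg t) : s < 0 :=
  (seg_of_nonpos ht ▸ hs).2

theorem mem_seg_mul_iff (hx : x ∈ seg t) (c : ℝ) : x ∈ seg (t * c) ↔ x / t ≤ c := by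
  rcases hx with ⟨h0, ht⟩ | ⟨ht, h0⟩
  · simp [seg, h0, h0.not_gt, div_le_iff₀' (h0.trans_le ht)]
  · simp [seg, h0, h0.not_gt, div_le_iff_of_neg' (ht.trans_lt h0)]

theorem eventually_mem_seg_iff (hy : y ≠ x) : ∀ᶠ u in 𝓝 x, y ∈ seg u ↔ y ∈ seg x := by
  rcases hy.lt_or_gt with h | h
  · filter_upwards [Ioi_mem_nhds h] with u hu
    simp [seg, h.le, (mem_Ioi.1 hu).le, h.not_ge, (mem_Ioi.1 hu).not_ge]
  · filter_upwards [Iio_mem_nhds h] with u hu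
    simp [seg, h.le, (mem_Iio.1 hu).le, h.not_ge, (mem_Iio.1 hu).not_ge]

/-- The neighbourhoods of `x` on the side of `0`: the filter `𝓝[<] x` for `0 < x` and `𝓝[>] x`
for `x < 0`. At `0`, where no segment reaches, it is all of `𝓝 0`. -/
def innerNhds (x : ℝ) : Filter ℝ := 𝓝[{u | x ∉ seg u}] x

/-- The neighbourhoods of `x` on the side away from `0`, including `x`: the filter `𝓝[≥] x` for
`0 < x` and `𝓝[≤] x` for `x < 0`. It is trivial at `0`. -/
def outerNhds (x : ℝ) : Filter ℝ := 𝓝[{u | x ∈ seg u}] x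

theorem innerNhds_of_pos (hx : 0 < x) : innerNhds x = 𝓝[<] x := by
  simp [innerNhds, seg, hx, hx.not_gt, Iio_def]

theorem innerNhds_of_neg (hx : x < 0) : innerNhds x = 𝓝[>] x := by
  simp [innerNhds, seg, hx, hx.not_gt, Ioi_def]

theorem outerNhds_of_pos (hx : 0 < x) : outerNhds x = 𝓝[≥] x := by
  simp [outerNhds, seg, hx, hx.not_gt, Ici_def]

theorem outerNhds_of_neg (hx : x < 0) : outerNhds x = 𝓝[≤] x := by
  simp [outerNhds, seg, hx, hx.not_gt, Iic_def]

theorem innerNhds_sup_outerNhds (x : ℝ) : innerNhds x ⊔ outerNhds x = 𝓝 x := by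
  rw [innerNhds, outerNhds, ← nhdsWithin_union, ← nhdsWithin_univ]
  congr 1
  ext u
  simpa using (em (x ∈ seg u)).symm

theorem innerNhds_neBot (hx : x ≠ 0) : (innerNhds x).NeBot := by
  rcases hx.lt_or_gt with h | h
  · rw [innerNhds_of_neg h]; infer_instance
  · rw [innerNhds_of_pos h]; infer_instance

theorem innerNhds_le_nhds : innerNhds x ≤ 𝓝 x := nhdsWithin_le_nhds

theorem outerNhds_le_nhds : outerNhds x ≤ 𝓝 x := nhdsWithin_le_nhds

end Segments

/-- The indefinite integral of `g` from `0`, taken over `seg t` and without a sign for negative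
`t`. -/
noncomputable def prim (μ : Measure ℝ) (g : ℝ → ℝ) (t : ℝ) : ℝ := ∫ s in seg t, g s ∂μ

/-- The points of the uniform subdivision of the segment from `0` to `t` into `n` parts. -/
noncomputable def grid (t : ℝ) (n i : ℕ) : ℝ := t * (i / n)

/-- The index `i` of the part of the subdivision `grid t n` of `seg t` in which `x` lies, that is,
beyond `grid t n i` and not beyond `grid t n (i + 1)`. -/
noncomputable def gridIndex (t : ℝ) (n : ℕ) (x : ℝ) : ℕ := ⌈x / t * n⌉₊ - 1

section StieltjesSums

variable {t x C : ℝ} {n i : ℕ} {μ : Measure ℝ} {g α : ℝ → ℝ} {A : ℝ → ℝ → ℝ}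

theorem div_pos_of_mem_seg (hx : x ∈ seg t) : 0 < x / t := by
  rcases hx with ⟨h0, ht⟩ | ⟨ht, h0⟩
  · exact div_pos h0 (h0.trans_le ht)
  · exact div_pos_of_neg_of_neg h0 (ht.trans_lt h0)

theorem mul_div_cancel_of_mem_seg (hx : x ∈ seg t) : t * (x / t) = x :=
  mul_div_cancel₀ x fun ht => (div_pos_of_mem_seg hx).ne' (by simp [ht])

theorem grid_mem_uIcc (hi : i ≤ n) : grid t n i ∈ uIcc 0 t := by
  have h0 : (0 : ℝ) ≤ i / n := by positivity
  have h1 : (i / n : ℝ) ≤ 1 := div_le_one_of_le₀ (mod_cast hi) n.cast_nonneg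
  rw [grid, mem_uIcc]
  rcases le_total 0 t with ht | ht
  · exact Or.inl ⟨by positivity, mul_le_of_le_one_right ht h1⟩
  · exact Or.inr ⟨by nlinarith, mul_nonpos_of_nonpos_of_nonneg ht h0⟩

theorem mem_seg_grid_iff (hx : x ∈ seg t) (hn : 0 < n) :
    x ∈ seg (grid t n i) ↔ gridIndex t n x < i := by
  have hn' : (0 : ℝ) < n := mod_cast hn
  have h1 : 1 ≤ ⌈x / t * n⌉₊ := Nat.ceil_pos.2 (mul_pos (div_pos_of_mem_seg hx) hn')
  rw [grid, mem_seg_mul_iff hx, le_div_iff₀ hn', ← Nat.ceil_le, gridIndex]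
  omega

theorem gridIndex_lt (hx : x ∈ seg t) (hn : 0 < n) : gridIndex t n x < n := by
  rw [← mem_seg_grid_iff hx hn, grid, div_self (mod_cast hn.ne'), mul_one]
  exact hx

theorem seg_grid_subset_succ (hi : i < n) : seg (grid t n i) ⊆ seg (grid t n (i + 1)) := by
  intro x hx
  have hxt : x ∈ seg t := seg_subset_seg (grid_mem_uIcc hi.le) hx
  have hn : 0 < n := Nat.zero_lt_of_lt hi
  exact (mem_seg_grid_iff hxt hn).2 (((mem_seg_grid_iff hxt hn).1 hx).trans i.lt_succ_self)

theorem tendsto_gridIndex_div (hx : x ∈ seg t) :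
    Tendsto (fun n : ℕ => (gridIndex t n x : ℝ) / n) atTop (𝓝 (x / t)) := by
  have h := (tendsto_nat_ceil_mul_div_atTop (div_pos_of_mem_seg hx).le).comp
    (tendsto_natCast_atTop_atTop (R := ℝ))
  have h' := h.sub (tendsto_one_div_atTop_nhds_zero_nat (𝕜 := ℝ))
  rw [sub_zero] at h'
  refine h'.congr' ?_
  filter_upwards [eventually_gt_atTop 0] with n hn
  have h1 : 1 ≤ ⌈x / t * n⌉₊ :=
    Nat.ceil_pos.2 (mul_pos (div_pos_of_mem_seg hx) (mod_cast hn))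
  rw [gridIndex, Nat.cast_sub h1, Nat.cast_one, sub_div]
  rfl

theorem tendsto_grid_gridIndex (hx : x ∈ seg t) :
    Tendsto (fun n => grid t n (gridIndex t n x)) atTop (innerNhds x) := by
  refine tendsto_nhdsWithin_iff.2 ⟨?_, ?_⟩
  · simpa [grid, mul_div_cancel_of_mem_seg hx] using (tendsto_gridIndex_div hx).const_mul t
  · filter_upwards [eventually_gt_atTop 0] with n hn
    exact fun h => lt_irrefl _ ((mem_seg_grid_iff hx hn).1 h)

theorem tendsto_grid_gridIndex_succ (hx : x ∈ seg t) :
    Tendsto (fun n => grid t n (gridIndex t n x + 1)) atTop (outerNhds x) := by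
  refine tendsto_nhdsWithin_iff.2 ⟨?_, ?_⟩
  · simpa [grid, add_div, mul_div_cancel_of_mem_seg hx] using
      ((tendsto_gridIndex_div hx).add (tendsto_one_div_atTop_nhds_zero_nat (𝕜 := ℝ))).const_mul t
  · filter_upwards [eventually_gt_atTop 0] with n hn
    exact (mem_seg_grid_iff hx hn).2 (Nat.lt_succ_self _)

/-- The part of the subdivision `grid t n` of `seg t` between its points of index `i` and
`i + 1`. -/
def gridCell (t : ℝ) (n i : ℕ) : Set ℝ := seg (grid t n (i + 1)) \ seg (grid t n i)

/-- The integrand of the Riemann–Stieltjes sum of `A u v` against `g ∂μ`: on the part of the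
subdivision between `u` and `v` it is `A u v` times `g`. -/
noncomputable def stieltjesStep (A : ℝ → ℝ → ℝ) (g : ℝ → ℝ) (t : ℝ) (n : ℕ) (x : ℝ) : ℝ :=
  ∑ i ∈ Finset.range n,
    (gridCell t n i).indicator (fun x => A (grid t n i) (grid t n (i + 1)) * g x) x

theorem measurableSet_gridCell : MeasurableSet (gridCell t n i) :=
  measurableSet_seg.diff measurableSet_seg

theorem gridCell_subset_seg (hi : i < n) : gridCell t n i ⊆ seg t :=
  sdiff_subset.trans (seg_subset_seg (grid_mem_uIcc hi))

theorem stieltjesStep_eq (hx : x ∈ seg t) (hn : 0 < n) :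
    stieltjesStep A g t n x =
      A (grid t n (gridIndex t n x)) (grid t n (gridIndex t n x + 1)) * g x := by
  have hcell : ∀ i, x ∈ gridCell t n i ↔ i = gridIndex t n x := fun i => by
    rw [gridCell, Set.mem_sdiff, mem_seg_grid_iff hx hn, mem_seg_grid_iff hx hn]
    omega
  rw [stieltjesStep, Finset.sum_eq_single_of_mem _ (Finset.mem_range.2 (gridIndex_lt hx hn)),
    indicator_of_mem ((hcell _).2 rfl)]
  exact fun i _ hi => indicator_of_notMem (mt (hcell i).1 hi) _

theorem integrableOn_indicator_gridCell (hg : IntegrableOn g (seg t) μ) (c : ℝ) :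
    IntegrableOn ((gridCell t n i).indicator fun x => c * g x) (seg t) μ :=
  IntegrableOn.indicator (hg.const_mul c) measurableSet_gridCell

theorem integrableOn_stieltjesStep (hg : IntegrableOn g (seg t) μ) :
    IntegrableOn (stieltjesStep A g t n) (seg t) μ :=
  integrable_finsetSum _ fun _ _ => integrableOn_indicator_gridCell hg _

theorem setIntegral_stieltjesStep (hg : IntegrableOn g (seg t) μ) :
    ∫ x in seg t, stieltjesStep A g t n x ∂μ =
      ∑ i ∈ Finset.range n, A (grid t n i) (grid t n (i + 1)) *
        (prim μ g (grid t n (i + 1)) - prim μ g (grid t n i)) := by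
  unfold stieltjesStep
  rw [integral_finsetSum _ fun _ _ => integrableOn_indicator_gridCell hg _]
  refine Finset.sum_congr rfl fun i hi => ?_
  have hi := Finset.mem_range.1 hi
  rw [setIntegral_indicator measurableSet_gridCell,
    inter_eq_self_of_subset_right (gridCell_subset_seg hi), integral_const_mul, gridCell,
    setIntegral_sdiff measurableSet_seg (hg.mono_set (seg_subset_seg (grid_mem_uIcc hi)))
      (seg_grid_subset_succ hi)]
  rfl

theorem abs_stieltjesStep_le (hC : ∀ u ∈ uIcc 0 t, ∀ v ∈ uIcc 0 t, |A u v| ≤ C) (hn : 0 < n)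
    (hx : x ∈ seg t) : |stieltjesStep A g t n x| ≤ C * |g x| := by
  have hi := gridIndex_lt hx hn
  rw [stieltjesStep_eq hx hn, abs_mul]
  exact mul_le_mul_of_nonneg_right
    (hC _ (grid_mem_uIcc hi.le) _ (grid_mem_uIcc hi)) (abs_nonneg _)

theorem tendsto_stieltjesStep (hx : x ∈ seg t)
    (hA : Tendsto (uncurry A) (innerNhds x ×ˢ outerNhds x) (𝓝 (α x))) :
    Tendsto (fun n => stieltjesStep A g t n x) atTop (𝓝 (α x * g x)) := by
  refine Tendsto.congr' ?_ ((hA.comp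
    ((tendsto_grid_gridIndex hx).prodMk (tendsto_grid_gridIndex_succ hx))).mul_const (g x))
  filter_upwards [eventually_gt_atTop 0] with n hn
  rw [stieltjesStep_eq hx hn]
  rfl

theorem integrableOn_mul_of_tendsto (hg : IntegrableOn g (seg t) μ)
    (hC : ∀ u ∈ uIcc 0 t, ∀ v ∈ uIcc 0 t, |A u v| ≤ C)
    (hA : ∀ x ∈ seg t, Tendsto (uncurry A) (innerNhds x ×ˢ outerNhds x) (𝓝 (α x))) :
    IntegrableOn (fun x => α x * g x) (seg t) μ := by
  have hlim : ∀ x ∈ seg t, Tendsto (fun n => stieltjesStep A g t n x) atTop (𝓝 (α x * g x)) :=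
    fun x hx => tendsto_stieltjesStep hx (hA x hx)
  refine (hg.norm.const_mul C).mono' (aestronglyMeasurable_of_tendsto_ae atTop
    (fun n => (integrableOn_stieltjesStep hg).aestronglyMeasurable)
    (ae_restrict_of_forall_mem measurableSet_seg hlim)) ?_
  refine ae_restrict_of_forall_mem measurableSet_seg fun x hx => ?_
  refine le_of_tendsto (hlim x hx).norm ?_
  filter_upwards [eventually_gt_atTop 0] with n hn using abs_stieltjesStep_le hC hn hx

theorem tendsto_sum_grid (hg : IntegrableOn g (seg t) μ)
    (hC : ∀ u ∈ uIcc 0 t, ∀ v ∈ uIcc 0 t, |A u v| ≤ C)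
    (hA : ∀ x ∈ seg t, Tendsto (uncurry A) (innerNhds x ×ˢ outerNhds x) (𝓝 (α x))) :
    Tendsto (fun n : ℕ => ∑ i ∈ Finset.range n, A (grid t n i) (grid t n (i + 1)) *
        (prim μ g (grid t n (i + 1)) - prim μ g (grid t n i)))
      atTop (𝓝 (∫ x in seg t, α x * g x ∂μ)) := by
  simp only [← setIntegral_stieltjesStep hg]
  refine tendsto_integral_filter_of_dominated_convergence (fun x => C * |g x|)
    (Eventually.of_forall fun n => (integrableOn_stieltjesStep hg).aestronglyMeasurable) ?_
    (hg.norm.const_mul C)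
    (ae_restrict_of_forall_mem measurableSet_seg fun x hx => tendsto_stieltjesStep hx (hA x hx))
  filter_upwards [eventually_gt_atTop 0] with n hn
  exact ae_restrict_of_forall_mem measurableSet_seg fun x hx => abs_stieltjesStep_le hC hn hx

theorem sum_grid_sub (H : ℝ → ℝ) (hn : 0 < n) :
    ∑ i ∈ Finset.range n, (H (grid t n (i + 1)) - H (grid t n i)) = H t - H 0 := by
  rw [Finset.sum_range_sub fun i => H (grid t n i)]
  have : (n : ℝ) ≠ 0 := mod_cast hn.ne'
  simp [grid, this]

end StieltjesSums

/-- `F` is, on the open interval `U` around `0`, the primitive of the signed measure `φ ∂μ`, taken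
over segments from `0`. -/
structure IsPrimitive (U : Set ℝ) (μ : Measure ℝ) (F φ : ℝ → ℝ) : Prop where
  isOpen : IsOpen U
  starConvex : StarConvex ℝ 0 U
  integrableOn : ∀ t ∈ U, IntegrableOn φ (seg t) μ
  eq_add_prim : ∀ t ∈ U, F t = F 0 + prim μ φ t

/-- The limit of the primitive `F` of `φ ∂μ` at `t` from the side of `0`, the value `F t` without
the mass of the atom at `t`. -/
noncomputable def innerLimit (μ : Measure ℝ) (F φ : ℝ → ℝ) (t : ℝ) : ℝ := F t - μ.real {t} * φ t

/-- `F` is bounded away from zero on every compact subset of `U`. -/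
def BddAwayOnCompacts (U : Set ℝ) (F : ℝ → ℝ) : Prop :=
  ∀ K : Set ℝ, IsCompact K → K ⊆ U → ∃ ε > (0 : ℝ), ∀ t ∈ K, ε ≤ |F t|

section Primitives

variable {U E S : Set ℝ} {μ ρ : Measure ℝ} {F G φ ψ g : ℝ → ℝ} {s t x : ℝ}

theorem prim_zero (μ : Measure ℝ) (g : ℝ → ℝ) : prim μ g 0 = 0 := by
  simp [prim, seg_zero]

theorem prim_congr (h : ∀ s ∈ seg t, φ s = ψ s) : prim μ φ t = prim μ ψ t :=
  setIntegral_congr_fun measurableSet_seg h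

theorem prim_neg_abs_mul_of_nonneg (ht : 0 ≤ t) :
    prim μ (fun s => -(|s| * g s)) t = -prim μ (fun s => s * g s) t := by
  rw [prim, prim, ← integral_neg]
  exact prim_congr fun s hs => by rw [abs_of_pos (pos_of_mem_seg ht hs)]

theorem prim_neg_abs_mul_of_nonpos (ht : t ≤ 0) :
    prim μ (fun s => -(|s| * g s)) t = prim μ (fun s => s * g s) t :=
  prim_congr fun s hs => by rw [abs_of_neg (neg_of_mem_seg ht hs), neg_mul, neg_neg]

theorem integrableOn_of_forall_seg {K : Set ℝ} (h0 : ρ {0} ≠ ⊤)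
    (hg : ∀ t ∈ U, IntegrableOn g (seg t) ρ) (hK : IsCompact K) (hKU : K ⊆ U) :
    IntegrableOn g K ρ := by
  obtain rfl | hne := K.eq_empty_or_nonempty
  · exact integrableOn_empty
  refine (((hg _ (hKU (hK.sInf_mem hne))).union (hg _ (hKU (hK.sSup_mem hne)))).union
    (integrableOn_singleton (hx := h0.lt_top))).mono_set fun x hx => ?_
  obtain rfl | hx0 := eq_or_ne x 0
  · exact Or.inr rfl
  · exact Or.inl (seg_subset_union (subset_Icc_csInf_csSup hK.bddBelow hK.bddAbove hx)
      (self_mem_seg hx0))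

theorem tendsto_prim (hφ : ∀ᶠ u in 𝓝 x, IntegrableOn φ (seg u) μ) (hE : MeasurableSet E)
    (hSE : ∀ y, ∀ᶠ u in 𝓝[S] x, y ∈ seg u ↔ y ∈ E) :
    Tendsto (prim μ φ) (𝓝[S] x) (𝓝 (∫ y in E, φ y ∂μ)) := by
  obtain ⟨b, c, -, hbc, hint⟩ := exists_Icc_mem_subset_of_mem_nhds hφ
  have hle : b ≤ c := nonempty_Icc.1 ⟨x, mem_of_mem_nhds hbc⟩
  have hdom : IntegrableOn φ (seg b ∪ seg c) μ :=
    (hint (left_mem_Icc.2 hle)).union (hint (right_mem_Icc.2 hle))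
  have hprim : prim μ φ = fun u => ∫ y, (seg u).indicator φ y ∂μ :=
    funext fun u => (integral_indicator measurableSet_seg).symm
  rw [hprim, ← integral_indicator hE]
  have hb : ∀ᶠ u in 𝓝[S] x, u ∈ Icc b c := nhdsWithin_le_nhds hbc
  refine tendsto_integral_filter_of_dominated_convergence
    ((seg b ∪ seg c).indicator fun y => ‖φ y‖) ?_ ?_
    (IntegrableOn.integrable_indicator hdom.norm (measurableSet_seg.union measurableSet_seg)) ?_
  · filter_upwards [hb] with u hu
    exact ((hint hu).integrable_indicator measurableSet_seg).aestronglyMeasurable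
  · filter_upwards [hb] with u hu
    refine Eventually.of_forall fun y => ?_
    rw [norm_indicator_eq_indicator_norm]
    exact indicator_le_indicator_of_subset (seg_subset_union hu) (fun _ => norm_nonneg _) y
  · refine Eventually.of_forall fun y => tendsto_const_nhds.congr' ?_
    filter_upwards [hSE y] with u hu
    by_cases hy : y ∈ E
    · rw [indicator_of_mem hy, indicator_of_mem (hu.2 hy)]
    · rw [indicator_of_notMem hy, indicator_of_notMem (mt hu.1 hy)]

theorem tendsto_prim_outerNhds (hφ : ∀ᶠ u in 𝓝 x, IntegrableOn φ (seg u) μ) :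
    Tendsto (prim μ φ) (outerNhds x) (𝓝 (prim μ φ x)) := by
  refine tendsto_prim hφ measurableSet_seg fun y => ?_
  obtain rfl | hy := eq_or_ne y x
  · filter_upwards [self_mem_nhdsWithin] with u hu
    refine iff_of_true hu (self_mem_seg (ne_zero_of_mem_seg hu))
  · exact nhdsWithin_le_nhds (eventually_mem_seg_iff hy)

theorem tendsto_prim_innerNhds (hφ : ∀ᶠ u in 𝓝 x, IntegrableOn φ (seg u) μ) (hx : x ≠ 0) :
    Tendsto (prim μ φ) (innerNhds x) (𝓝 (prim μ φ x - μ.real {x} * φ x)) := by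
  have hdiff : ∫ y in seg x \ {x}, φ y ∂μ = prim μ φ x - μ.real {x} * φ x := by
    rw [setIntegral_sdiff (measurableSet_singleton x) hφ.self_of_nhds
      (singleton_subset_iff.2 (self_mem_seg hx)), integral_singleton, smul_eq_mul, prim]
  rw [← hdiff]
  refine tendsto_prim hφ (measurableSet_seg.diff (measurableSet_singleton x)) fun y => ?_
  obtain rfl | hy := eq_or_ne y x
  · filter_upwards [self_mem_nhdsWithin] with u hu
    exact iff_of_false hu fun h => h.2 rfl
  · filter_upwards [nhdsWithin_le_nhds (eventually_mem_seg_iff hy)] with u hu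
    simpa [hy] using hu

theorem tendsto_prim_zero (hφ : ∀ᶠ u in 𝓝 0, IntegrableOn φ (seg u) μ) :
    Tendsto (prim μ φ) (𝓝 0) (𝓝 0) := by
  have h := tendsto_prim (S := univ) (E := ∅) hφ MeasurableSet.empty fun y => ?_
  · simpa using h
  rw [nhdsWithin_univ]
  obtain rfl | hy := eq_or_ne y 0
  · exact Eventually.of_forall fun u => iff_of_false zero_notMem_seg (notMem_empty _)
  · simpa [seg_zero] using eventually_mem_seg_iff hy

theorem BddAwayOnCompacts.ne_zero (hF : BddAwayOnCompacts U F) (ht : t ∈ U) : F t ≠ 0 := by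
  obtain ⟨ε, hε, hle⟩ := hF {t} isCompact_singleton (singleton_subset_iff.2 ht)
  exact abs_pos.1 (hε.trans_le (hle t rfl))

namespace IsPrimitive

theorem uIcc_subset (hF : IsPrimitive U μ F φ) (ht : t ∈ U) : uIcc 0 t ⊆ U := by
  rw [← segment_eq_uIcc]
  exact hF.starConvex.segment_subset ht

theorem seg_subset (hF : IsPrimitive U μ F φ) (ht : t ∈ U) : seg t ⊆ U :=
  seg_subset_uIcc.trans (hF.uIcc_subset ht)

theorem eventually_integrableOn (hF : IsPrimitive U μ F φ) (ht : t ∈ U) :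
    ∀ᶠ u in 𝓝 t, IntegrableOn φ (seg u) μ :=
  (hF.isOpen.eventually_mem ht).mono hF.integrableOn

theorem tendsto_of_prim (hF : IsPrimitive U μ F φ) (ht : t ∈ U) {l : Filter ℝ} (hl : l ≤ 𝓝 t)
    (h : Tendsto (prim μ φ) l (𝓝 s)) : Tendsto F l (𝓝 (F 0 + s)) :=
  (h.const_add (F 0)).congr' <| hl <|
    (hF.isOpen.eventually_mem ht).mono fun u hu => (hF.eq_add_prim u hu).symm

theorem tendsto_outerNhds (hF : IsPrimitive U μ F φ) (ht : t ∈ U) :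
    Tendsto F (outerNhds t) (𝓝 (F t)) := by
  rw [hF.eq_add_prim t ht]
  exact hF.tendsto_of_prim ht outerNhds_le_nhds
    (tendsto_prim_outerNhds (hF.eventually_integrableOn ht))

theorem tendsto_innerNhds (hF : IsPrimitive U μ F φ) (ht : t ∈ U) (h0 : t ≠ 0) :
    Tendsto F (innerNhds t) (𝓝 (innerLimit μ F φ t)) := by
  rw [innerLimit, hF.eq_add_prim t ht, add_sub_assoc]
  exact hF.tendsto_of_prim ht innerNhds_le_nhds
    (tendsto_prim_innerNhds (hF.eventually_integrableOn ht) h0)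

theorem continuousAt_zero (hF : IsPrimitive U μ F φ) (h0 : (0 : ℝ) ∈ U) : ContinuousAt F 0 := by
  have h := hF.tendsto_of_prim h0 le_rfl (tendsto_prim_zero (hF.eventually_integrableOn h0))
  rwa [add_zero] at h

theorem leftLim_of_pos (hF : IsPrimitive U μ F φ) (ht : t ∈ U) (h0 : 0 < t) :
    leftLim F t = innerLimit μ F φ t :=
  leftLim_eq_of_tendsto (innerNhds_of_pos h0 ▸ hF.tendsto_innerNhds ht h0.ne')

theorem rightLim_of_neg (hF : IsPrimitive U μ F φ) (ht : t ∈ U) (h0 : t < 0) :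
    rightLim F t = innerLimit μ F φ t :=
  rightLim_eq_of_tendsto (innerNhds_of_neg h0 ▸ hF.tendsto_innerNhds ht h0.ne)

theorem rightLim_of_pos (hF : IsPrimitive U μ F φ) (ht : t ∈ U) (h0 : 0 < t) :
    rightLim F t = F t :=
  rightLim_eq_of_tendsto ((hF.tendsto_outerNhds ht).mono_left
    (outerNhds_of_pos h0 ▸ nhdsWithin_mono _ Ioi_subset_Ici_self))

theorem leftLim_of_neg (hF : IsPrimitive U μ F φ) (ht : t ∈ U) (h0 : t < 0) :
    leftLim F t = F t :=
  leftLim_eq_of_tendsto ((hF.tendsto_outerNhds ht).mono_left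
    (outerNhds_of_neg h0 ▸ nhdsWithin_mono _ Iio_subset_Iic_self))

theorem exists_abs_le (hF : IsPrimitive U μ F φ) (ht : t ∈ U) :
    ∃ C, ∀ u ∈ uIcc 0 t, |F u| ≤ C := by
  refine ⟨|F 0| + ∫ s in seg t, ‖φ s‖ ∂μ, fun u hu => ?_⟩
  rw [hF.eq_add_prim u (hF.uIcc_subset ht hu)]
  refine (abs_add_le _ _).trans (add_le_add_right ?_ _)
  exact (norm_integral_le_integral_norm φ).trans <| setIntegral_mono_set (hF.integrableOn t ht).norm
    (Eventually.of_forall fun _ => norm_nonneg _) (seg_subset_seg hu).eventuallyLE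

theorem integrableOn_mul (hF : IsPrimitive U μ F φ) (ht : t ∈ U) (hg : IntegrableOn g (seg t) ρ) :
    IntegrableOn (fun s => F s * g s) (seg t) ρ := by
  obtain ⟨C, hC⟩ := hF.exists_abs_le ht
  exact integrableOn_mul_of_tendsto (A := fun _ v => F v) hg (fun _ _ => hC) fun x hx =>
    (hF.tendsto_outerNhds (hF.seg_subset ht hx)).comp tendsto_snd

theorem integrableOn_innerLimit_mul (hF : IsPrimitive U μ F φ) (ht : t ∈ U)
    (hg : IntegrableOn g (seg t) ρ) :
    IntegrableOn (fun s => innerLimit μ F φ s * g s) (seg t) ρ := by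
  obtain ⟨C, hC⟩ := hF.exists_abs_le ht
  exact integrableOn_mul_of_tendsto (A := fun u _ => F u) hg (fun u hu _ _ => hC u hu) fun x hx =>
    (hF.tendsto_innerNhds (hF.seg_subset ht hx) (ne_zero_of_mem_seg hx)).comp tendsto_fst

theorem mul (hF : IsPrimitive U μ F φ) (hG : IsPrimitive U μ G ψ) :
    IsPrimitive U μ (fun s => F s * G s) (fun s => F s * ψ s + innerLimit μ G ψ s * φ s) where
  isOpen := hF.isOpen
  starConvex := hF.starConvex
  integrableOn t ht := (hF.integrableOn_mul ht (hG.integrableOn t ht)).add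
    (hG.integrableOn_innerLimit_mul ht (hF.integrableOn t ht))
  eq_add_prim t ht := by
    have hψ := hG.integrableOn t ht
    have hφ := hF.integrableOn t ht
    obtain ⟨C, hC⟩ := hF.exists_abs_le ht
    obtain ⟨D, hD⟩ := hG.exists_abs_le ht
    have hlim := (tendsto_sum_grid (A := fun _ v => F v) (α := F) hψ (fun _ _ => hC) fun x hx =>
        (hF.tendsto_outerNhds (hF.seg_subset ht hx)).comp tendsto_snd).add
      (tendsto_sum_grid (A := fun u _ => G u) (α := innerLimit μ G ψ) hφ
        (fun u hu _ _ => hD u hu) fun x hx =>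
        (hG.tendsto_innerNhds (hG.seg_subset ht hx) (ne_zero_of_mem_seg hx)).comp tendsto_fst)
    rw [← integral_add (hF.integrableOn_mul ht hψ) (hG.integrableOn_innerLimit_mul ht hφ)] at hlim
    refine eq_add_of_sub_eq' (tendsto_nhds_unique (tendsto_const_nhds.congr' ?_) hlim)
    filter_upwards [eventually_gt_atTop 0] with n hn
    -- On each cell, `F v * G v - F u * G u = F v * (G v - G u) + G u * (F v - F u)`.
    rw [← sum_grid_sub (fun s => F s * G s) hn, ← Finset.sum_add_distrib]
    refine Finset.sum_congr rfl fun i hi => ?_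
    have hi := Finset.mem_range.1 hi
    have hu := hF.uIcc_subset ht (grid_mem_uIcc hi.le)
    have hv := hF.uIcc_subset ht (grid_mem_uIcc hi)
    simp only [hF.eq_add_prim _ hu, hF.eq_add_prim _ hv, hG.eq_add_prim _ hu, hG.eq_add_prim _ hv]
    ring

theorem integrableOn_leftLim_mul (hF : IsPrimitive U μ F φ) (ht : t ∈ U)
    (hg : IntegrableOn g (seg t) ρ) : IntegrableOn (fun s => leftLim F s * g s) (seg t) ρ := by
  rcases le_total 0 t with h | h
  · refine (hF.integrableOn_innerLimit_mul ht hg).congr_fun (fun s hs => ?_) measurableSet_seg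
    exact congrArg (· * g s) (hF.leftLim_of_pos (hF.seg_subset ht hs) (pos_of_mem_seg h hs)).symm
  · refine (hF.integrableOn_mul ht hg).congr_fun (fun s hs => ?_) measurableSet_seg
    exact congrArg (· * g s) (hF.leftLim_of_neg (hF.seg_subset ht hs) (neg_of_mem_seg h hs)).symm

theorem integrableOn_rightLim_mul (hF : IsPrimitive U μ F φ) (ht : t ∈ U)
    (hg : IntegrableOn g (seg t) ρ) : IntegrableOn (fun s => rightLim F s * g s) (seg t) ρ := by
  rcases le_total 0 t with h | h
  · refine (hF.integrableOn_mul ht hg).congr_fun (fun s hs => ?_) measurableSet_seg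
    exact congrArg (· * g s) (hF.rightLim_of_pos (hF.seg_subset ht hs) (pos_of_mem_seg h hs)).symm
  · refine (hF.integrableOn_innerLimit_mul ht hg).congr_fun (fun s hs => ?_) measurableSet_seg
    exact congrArg (· * g s) (hF.rightLim_of_neg (hF.seg_subset ht hs) (neg_of_mem_seg h hs)).symm

theorem innerLimit_ne_zero (hF : IsPrimitive U μ F φ) (hF0 : BddAwayOnCompacts U F) (ht : t ∈ U)
    (h0 : t ≠ 0) : innerLimit μ F φ t ≠ 0 := by
  obtain ⟨K, hK, htK, hKU⟩ := exists_compact_subset hF.isOpen ht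
  obtain ⟨ε, hε, hle⟩ := hF0 K hK hKU
  have := innerNhds_neBot h0
  have h : ε ≤ |innerLimit μ F φ t| := ge_of_tendsto (hF.tendsto_innerNhds ht h0).abs <|
    innerNhds_le_nhds <| Filter.mem_of_superset (mem_interior_iff_mem_nhds.1 htK) hle
  exact abs_pos.1 (hε.trans_le h)

theorem tendsto_inv_mul_inv (hF : IsPrimitive U μ F φ) (hF0 : BddAwayOnCompacts U F) (ht : t ∈ U)
    (h0 : t ≠ 0) : Tendsto (uncurry fun u v => -((F u)⁻¹ * (F v)⁻¹))
      (innerNhds t ×ˢ outerNhds t) (𝓝 (-((innerLimit μ F φ t)⁻¹ * (F t)⁻¹))) :=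
  ((((hF.tendsto_innerNhds ht h0).inv₀ (hF.innerLimit_ne_zero hF0 ht h0)).comp tendsto_fst).mul
    (((hF.tendsto_outerNhds ht).inv₀ (hF0.ne_zero ht)).comp tendsto_snd)).neg

theorem exists_abs_inv_mul_inv_le (hF : IsPrimitive U μ F φ) (hF0 : BddAwayOnCompacts U F)
    (ht : t ∈ U) : ∃ C, ∀ u ∈ uIcc 0 t, ∀ v ∈ uIcc 0 t, |-((F u)⁻¹ * (F v)⁻¹)| ≤ C := by
  obtain ⟨ε, hε, hle⟩ := hF0 _ isCompact_uIcc (hF.uIcc_subset ht)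
  refine ⟨ε⁻¹ * ε⁻¹, fun u hu v hv => ?_⟩
  rw [abs_neg, abs_mul, abs_inv, abs_inv]
  gcongr
  exacts [hle u hu, hle v hv]

theorem integrableOn_inv_mul_inv_mul (hF : IsPrimitive U μ F φ) (hF0 : BddAwayOnCompacts U F)
    (ht : t ∈ U) (hg : IntegrableOn g (seg t) ρ) :
    IntegrableOn (fun s => -((innerLimit μ F φ s)⁻¹ * (F s)⁻¹) * g s) (seg t) ρ := by
  obtain ⟨C, hC⟩ := hF.exists_abs_inv_mul_inv_le hF0 ht
  exact integrableOn_mul_of_tendsto hg hC fun s hs =>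
    hF.tendsto_inv_mul_inv hF0 (hF.seg_subset ht hs) (ne_zero_of_mem_seg hs)

theorem inv (hF : IsPrimitive U μ F φ) (hF0 : BddAwayOnCompacts U F) :
    IsPrimitive U μ (fun s => (F s)⁻¹) (fun s => -((innerLimit μ F φ s)⁻¹ * (F s)⁻¹) * φ s) where
  isOpen := hF.isOpen
  starConvex := hF.starConvex
  integrableOn t ht := hF.integrableOn_inv_mul_inv_mul hF0 ht (hF.integrableOn t ht)
  eq_add_prim t ht := by
    obtain ⟨C, hC⟩ := hF.exists_abs_inv_mul_inv_le hF0 ht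
    refine eq_add_of_sub_eq' (tendsto_nhds_unique (tendsto_const_nhds.congr' ?_)
      (tendsto_sum_grid (hF.integrableOn t ht) hC fun s hs =>
        hF.tendsto_inv_mul_inv hF0 (hF.seg_subset ht hs) (ne_zero_of_mem_seg hs)))
    filter_upwards [eventually_gt_atTop 0] with n hn
    -- On each cell, `(F v)⁻¹ - (F u)⁻¹ = -((F u)⁻¹ * (F v)⁻¹) * (F v - F u)`.
    rw [← sum_grid_sub (fun s => (F s)⁻¹) hn]
    refine Finset.sum_congr rfl fun i hi => ?_
    have hi := Finset.mem_range.1 hi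
    have hu := hF.uIcc_subset ht (grid_mem_uIcc hi.le)
    have hv := hF.uIcc_subset ht (grid_mem_uIcc hi)
    rw [← add_sub_add_left_eq_sub (prim μ φ _) (prim μ φ _) (F 0), ← hF.eq_add_prim _ hu,
      ← hF.eq_add_prim _ hv]
    have hu0 := hF0.ne_zero hu
    have hv0 := hF0.ne_zero hv
    field_simp
    ring

end IsPrimitive

end Primitives

/-- The BV₀ pair of the function `R` and the signed measure `h ∂μ` on the open interval `U` around
`0`. Over segments from `0` the two relations `dR = -t dν`, integrated without sign, become the
single relation with density `-|t| h`. -/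
structure IsBVPair (U : Set ℝ) (μ : Measure ℝ) (R h : ℝ → ℝ) : Prop
    extends IsPrimitive U μ R fun s => -(|s| * h s) where
  integrableOn_density : ∀ t ∈ U, IntegrableOn h (seg t) μ

/-- The transform `T_{R,ν} f` of the pair of `R` and `dν = h ∂μ`. -/
noncomputable def bvTransform (μ : Measure ℝ) (R h f : ℝ → ℝ) (t : ℝ) : ℝ :=
  R t * f t + |t| * prim μ (fun s => f s * h s) t

/-- The density with respect to `μ` of `Q(t⁻) dν_R + R(t⁺) dν_Q`, where `dν_R = h₁ ∂μ` and
`dν_Q = h₂ ∂μ`. The last term collects the jumps at the atoms of `μ`; in this form the density is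
symmetric in the two pairs. -/
noncomputable def mulDensity (μ : Measure ℝ) (R₁ h₁ R₂ h₂ : ℝ → ℝ) (s : ℝ) : ℝ :=
  R₂ s * h₁ s + R₁ s * h₂ s + μ.real {s} * |s| * (h₁ s * h₂ s)

/-- The limit at `t` from the side of `0` of the function `R` of a BV₀ pair. -/
noncomputable def bvInnerLimit (μ : Measure ℝ) (R h : ℝ → ℝ) : ℝ → ℝ :=
  innerLimit μ R fun s => -(|s| * h s)

/-- The density with respect to `μ` of `ν_{1/R}`, where `dν_R = h ∂μ`. -/
noncomputable def invDensity (μ : Measure ℝ) (R h : ℝ → ℝ) (s : ℝ) : ℝ :=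
  -((bvInnerLimit μ R h s)⁻¹ * (R s)⁻¹) * h s

section BVPairs

variable {U : Set ℝ} {μ : Measure ℝ} {R R₁ R₂ h h₁ h₂ f g : ℝ → ℝ} {s t : ℝ}

theorem bvInnerLimit_eq (μ : Measure ℝ) (R h : ℝ → ℝ) (s : ℝ) :
    bvInnerLimit μ R h s = R s + μ.real {s} * |s| * h s := by
  rw [bvInnerLimit, innerLimit]
  ring

theorem mulDensity_comm (μ : Measure ℝ) (R₁ h₁ R₂ h₂ : ℝ → ℝ) :
    mulDensity μ R₁ h₁ R₂ h₂ = mulDensity μ R₂ h₂ R₁ h₁ := by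
  ext s
  rw [mulDensity, mulDensity]
  ring

theorem mulDensity_eq_bvInnerLimit_mul_add (μ : Measure ℝ) (R₁ h₁ R₂ h₂ : ℝ → ℝ) (s : ℝ) :
    mulDensity μ R₁ h₁ R₂ h₂ s = bvInnerLimit μ R₂ h₂ s * h₁ s + R₁ s * h₂ s := by
  rw [mulDensity, bvInnerLimit_eq]
  ring

theorem mulDensity_eq_mul_add_bvInnerLimit (μ : Measure ℝ) (R₁ h₁ R₂ h₂ : ℝ → ℝ) (s : ℝ) :
    mulDensity μ R₁ h₁ R₂ h₂ s = R₂ s * h₁ s + bvInnerLimit μ R₁ h₁ s * h₂ s := by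
  rw [mulDensity, bvInnerLimit_eq]
  ring

theorem bvTransform_congr (hf : ∀ s ∈ uIcc 0 t, f s = g s) :
    bvTransform μ R h f t = bvTransform μ R h g t := by
  rw [bvTransform, bvTransform, hf t right_mem_uIcc,
    prim_congr fun s hs => by rw [hf s (seg_subset_uIcc hs)]]

namespace IsBVPair

theorem integrableOn_continuousOn_mul (hR : IsBVPair U μ R h) (hf : ContinuousOn f U) (ht : t ∈ U) :
    IntegrableOn (fun s => f s * h s) (seg t) μ :=
  (hR.integrableOn_density t ht).continuousOn_mul_of_subset (hf.mono (hR.uIcc_subset ht))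
    isCompact_uIcc measurableSet_seg seg_subset_uIcc

theorem isPrimitive_prim (hR : IsBVPair U μ R h) (hf : ContinuousOn f U) :
    IsPrimitive U μ (prim μ fun s => f s * h s) fun s => f s * h s where
  isOpen := hR.isOpen
  starConvex := hR.starConvex
  integrableOn _ ht := hR.integrableOn_continuousOn_mul hf ht
  eq_add_prim t _ := by rw [prim_zero, zero_add]

theorem continuousOn_bvTransform (hR : IsBVPair U μ R h) (hf : ContinuousOn f U) :
    ContinuousOn (bvTransform μ R h f) U := by
  intro t ht
  have hft : ContinuousAt f t := hf.continuousAt (hR.isOpen.mem_nhds ht)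
  have habs : ContinuousAt (fun t : ℝ => |t|) t := continuous_abs.continuousAt
  have hG := hR.isPrimitive_prim hf
  refine ContinuousAt.continuousWithinAt ?_
  obtain rfl | h0 := eq_or_ne t 0
  · exact ((hR.continuousAt_zero ht).mul hft).add (habs.mul (hG.continuousAt_zero ht))
  rw [ContinuousAt, ← innerNhds_sup_outerNhds, tendsto_sup]
  constructor
  · -- Both terms have a jump at `t` if `ν` has an atom there, and the two jumps cancel.
    have hjumps : bvTransform μ R h f t = bvInnerLimit μ R h t * f t +
        |t| * innerLimit μ (prim μ fun s => f s * h s) (fun s => f s * h s) t := by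
      rw [bvTransform, bvInnerLimit, innerLimit, innerLimit]
      ring
    rw [hjumps]
    exact ((hR.tendsto_innerNhds ht h0).mul (hft.mono_left innerNhds_le_nhds)).add
      ((habs.mono_left innerNhds_le_nhds).mul (hG.tendsto_innerNhds ht h0))
  · exact ((hR.tendsto_outerNhds ht).mul (hft.mono_left outerNhds_le_nhds)).add
      ((habs.mono_left outerNhds_le_nhds).mul (hG.tendsto_outerNhds ht))

theorem mul (hR₁ : IsBVPair U μ R₁ h₁) (hR₂ : IsBVPair U μ R₂ h₂) :
    IsBVPair U μ (fun s => R₁ s * R₂ s) (mulDensity μ R₁ h₁ R₂ h₂) where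
  toIsPrimitive := by
    convert hR₁.toIsPrimitive.mul hR₂.toIsPrimitive using 2 with s
    rw [mulDensity_eq_bvInnerLimit_mul_add, bvInnerLimit]
    ring
  integrableOn_density t ht := by
    simp only [funext (mulDensity_eq_bvInnerLimit_mul_add μ R₁ h₁ R₂ h₂)]
    exact (hR₂.integrableOn_innerLimit_mul ht (hR₁.integrableOn_density t ht)).add
      (hR₁.integrableOn_mul ht (hR₂.integrableOn_density t ht))

theorem leftLim_mul_add_rightLim_mul (hR₁ : IsBVPair U μ R₁ h₁) (hR₂ : IsBVPair U μ R₂ h₂)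
    (ht : t ∈ U) (h0 : t ≠ 0) :
    leftLim R₂ t * h₁ t + rightLim R₁ t * h₂ t = mulDensity μ R₁ h₁ R₂ h₂ t := by
  rcases h0.lt_or_gt with h | h
  · rw [hR₂.leftLim_of_neg ht h, hR₁.rightLim_of_neg ht h, mulDensity_eq_mul_add_bvInnerLimit,
      bvInnerLimit]
  · rw [hR₂.leftLim_of_pos ht h, hR₁.rightLim_of_pos ht h, mulDensity_eq_bvInnerLimit_mul_add,
      bvInnerLimit]

theorem leftLim_mul_rightLim (hR : IsBVPair U μ R h) (ht : t ∈ U) (h0 : t ≠ 0) :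
    leftLim R t * rightLim R t = bvInnerLimit μ R h t * R t := by
  rcases h0.lt_or_gt with h | h
  · rw [hR.leftLim_of_neg ht h, hR.rightLim_of_neg ht h, mul_comm, bvInnerLimit]
  · rw [hR.leftLim_of_pos ht h, hR.rightLim_of_pos ht h, bvInnerLimit]

theorem bvTransform_bvTransform (hR₁ : IsBVPair U μ R₁ h₁) (hR₂ : IsBVPair U μ R₂ h₂)
    (hf : ContinuousOn f U) (ht : t ∈ U) :
    bvTransform μ R₁ h₁ (bvTransform μ R₂ h₂ f) t =
      bvTransform μ (fun s => R₁ s * R₂ s) (mulDensity μ R₁ h₁ R₂ h₂) f t := by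
  have hprod := hR₁.toIsPrimitive.mul (hR₂.isPrimitive_prim hf)
  have hparts := hprod.eq_add_prim t ht
  simp only [prim_zero, mul_zero, zero_add] at hparts
  have hsum : R₁ t * prim μ (fun s => f s * h₂ s) t +
        prim μ (fun s => bvTransform μ R₂ h₂ f s * h₁ s) t =
      prim μ (fun s => f s * mulDensity μ R₁ h₁ R₂ h₂ s) t := by
    rw [hparts, prim, prim, ← integral_add (hprod.integrableOn t ht)
      (hR₁.integrableOn_continuousOn_mul (hR₂.continuousOn_bvTransform hf) ht)]
    refine prim_congr fun s _ => ?_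
    simp only [innerLimit, bvTransform, mulDensity]
    ring
  rw [bvTransform, bvTransform.eq_1 μ (fun s => R₁ s * R₂ s), ← hsum, bvTransform.eq_1 μ R₂]
  ring

theorem bvTransform_comm (hR₁ : IsBVPair U μ R₁ h₁) (hR₂ : IsBVPair U μ R₂ h₂)
    (hf : ContinuousOn f U) (ht : t ∈ U) :
    bvTransform μ R₁ h₁ (bvTransform μ R₂ h₂ f) t =
      bvTransform μ R₂ h₂ (bvTransform μ R₁ h₁ f) t := by
  simp only [hR₁.bvTransform_bvTransform hR₂ hf ht, hR₂.bvTransform_bvTransform hR₁ hf ht,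
    mulDensity_comm μ R₁, mul_comm (R₁ _)]

theorem inv (hR : IsBVPair U μ R h) (hR0 : BddAwayOnCompacts U R) :
    IsBVPair U μ (fun s => (R s)⁻¹) (invDensity μ R h) where
  toIsPrimitive := by
    convert hR.toIsPrimitive.inv hR0 using 2 with s
    rw [invDensity, bvInnerLimit]
    ring
  integrableOn_density t ht :=
    hR.integrableOn_inv_mul_inv_mul hR0 ht (hR.integrableOn_density t ht)

theorem mulDensity_invDensity (hR : IsBVPair U μ R h) (hR0 : BddAwayOnCompacts U R) (ht : t ∈ U)
    (h0 : t ≠ 0) : mulDensity μ R h (fun s => (R s)⁻¹) (invDensity μ R h) t = 0 := by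
  have hR1 : R t ≠ 0 := hR0.ne_zero ht
  have hR2 : bvInnerLimit μ R h t ≠ 0 := hR.innerLimit_ne_zero hR0 ht h0
  rw [mulDensity_eq_mul_add_bvInnerLimit, invDensity]
  field_simp
  ring

theorem bvTransform_bvTransform_inv (hR : IsBVPair U μ R h) (hR0 : BddAwayOnCompacts U R)
    (hf : ContinuousOn f U) (ht : t ∈ U) :
    bvTransform μ R h (bvTransform μ (fun s => (R s)⁻¹) (invDensity μ R h) f) t = f t := by
  have hprim : prim μ (fun s => f s *
      mulDensity μ R h (fun s => (R s)⁻¹) (invDensity μ R h) s) t = 0 := by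
    refine setIntegral_eq_zero_of_forall_eq_zero fun s hs => ?_
    rw [hR.mulDensity_invDensity hR0 (hR.seg_subset ht hs) (ne_zero_of_mem_seg hs), mul_zero]
  rw [hR.bvTransform_bvTransform (hR.inv hR0) hf ht, bvTransform, hprim,
    mul_inv_cancel₀ (hR0.ne_zero ht), one_mul, mul_zero, add_zero]

end IsBVPair

end BVPairs

theorem sigmaFinite_of_isSigmaCompact {X : Type*} [TopologicalSpace X] [MeasurableSpace X]
    {ν : Measure X} {U : Set X} (hU : IsSigmaCompact U) (hνU : ν Uᶜ = 0)
    (hν : ∀ K, IsCompact K → K ⊆ U → ν K ≠ ⊤) : SigmaFinite ν := by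
  obtain ⟨K, hK, rfl⟩ := hU
  refine ⟨⟨⟨fun n => (⋃ n, K n)ᶜ ∪ K n, fun _ => mem_univ _, fun n => ?_, ?_⟩⟩⟩
  · exact measure_union_lt_top (hνU.trans_lt ENNReal.zero_lt_top)
      (hν _ (hK n) (subset_iUnion K n)).lt_top
  · rw [← union_iUnion, compl_union_self]

theorem isSigmaCompact_Ioo (a b : ℝ) : IsSigmaCompact (Ioo a b) :=
  have := (isOpen_Ioo (a := a) (b := b)).locallyCompactSpace
  isSigmaCompact_iff_sigmaCompactSpace.2 inferInstance

theorem ite_add_mul_seg (a : ℝ) (F : Set ℝ → ℝ) (t : ℝ) :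
    (if 0 < t then a + t * F (Ioc 0 t) else a - t * F (Ico t 0)) = a + |t| * F (seg t) := by
  split_ifs with h
  · rw [abs_of_pos h, seg_of_nonneg h.le]
  · rw [abs_of_nonpos (not_lt.1 h), seg_of_nonpos (not_lt.1 h)]
    ring

namespace NormBV0

variable {P Q : NormBV0} {μ : Measure ℝ} {f : ℝ → ℝ} {S : Set ℝ} {t : ℝ}

/-- The total variation measure `|ν|` of a normalized BV₀ pair. -/
noncomputable def tv (P : NormBV0) : Measure ℝ := P.νp + P.νm

/-- The density `dν/dμ` of the signed measure `ν` of a normalized BV₀ pair, for measures `μ`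
dominating its total variation. -/
noncomputable def density (P : NormBV0) (μ : Measure ℝ) (s : ℝ) : ℝ :=
  (P.νp.rnDeriv μ s).toReal - (P.νm.rnDeriv μ s).toReal

instance : SigmaFinite P.νp :=
  sigmaFinite_of_isSigmaCompact (isSigmaCompact_Ioo _ _) P.supp_p P.locfin_p

instance : SigmaFinite P.νm :=
  sigmaFinite_of_isSigmaCompact (isSigmaCompact_Ioo _ _) P.supp_m P.locfin_m

instance : SigmaFinite P.tv :=
  inferInstanceAs (SigmaFinite (P.νp + P.νm))

theorem tv_singleton_zero_ne_top (P : NormBV0) : P.tv {0} ≠ ⊤ := by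
  simp [tv, P.zero_p, P.zero_m]

theorem integrableOn_seg_tv (P : NormBV0) (hf : ContinuousOn f (Ioo (-1 : ℝ) 1))
    (ht : t ∈ Ioo (-1 : ℝ) 1) : IntegrableOn f (seg t) P.tv := by
  have hsub : uIcc 0 t ⊆ Ioo (-1 : ℝ) 1 := ordConnected_Ioo.uIcc_subset (by norm_num) ht
  have hfin : P.tv (uIcc 0 t) ≠ ⊤ :=
    ENNReal.add_ne_top.2 ⟨P.locfin_p _ isCompact_uIcc hsub, P.locfin_m _ isCompact_uIcc hsub⟩
  obtain ⟨C, hC⟩ := isCompact_uIcc.exists_bound_of_continuousOn (hf.mono hsub)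
  have hint : IntegrableOn f (uIcc 0 t) P.tv :=
    ⟨(hf.mono hsub).aestronglyMeasurable measurableSet_uIcc, .restrict_of_bounded (C := C)
      hfin.lt_top ((ae_restrict_iff' measurableSet_uIcc).2 (.of_forall hC))⟩
  exact hint.mono_set seg_subset_uIcc

theorem νp_absolutelyContinuous (hμ : P.tv ≪ μ) : P.νp ≪ μ :=
  (Measure.le_add_right le_rfl).absolutelyContinuous.trans hμ

theorem νm_absolutelyContinuous (hμ : P.tv ≪ μ) : P.νm ≪ μ :=
  (Measure.le_add_left le_rfl).absolutelyContinuous.trans hμ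

section Density

variable [SigmaFinite μ]

theorem integrableOn_mul_rnDeriv {ν : Measure ℝ} [SigmaFinite ν] (hν : ν ≪ μ)
    (hf : IntegrableOn f S ν) (hS : MeasurableSet S) :
    IntegrableOn (fun s => (ν.rnDeriv μ s).toReal * f s) S μ := by
  rw [← integrable_indicator_iff hS] at hf ⊢
  refine ((integrable_toReal_rnDeriv_mul_iff hν).2 hf).congr (Eventually.of_forall fun s => ?_)
  simp only [indicator]
  split_ifs <;> simp

theorem integrableOn_mul_density (hμ : P.tv ≪ μ) (hf : IntegrableOn f S P.tv)
    (hS : MeasurableSet S) : IntegrableOn (fun s => f s * P.density μ s) S μ := by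
  obtain ⟨hp, hm⟩ := integrableOn_add_measure.1 hf
  refine ((integrableOn_mul_rnDeriv (νp_absolutelyContinuous hμ) hp hS).sub
    (integrableOn_mul_rnDeriv (νm_absolutelyContinuous hμ) hm hS)).congr_fun (fun s _ => ?_) hS
  simp only [density, Pi.sub_apply]
  ring

theorem integ_eq_setIntegral_mul_density (hμ : P.tv ≪ μ) (hf : IntegrableOn f S P.tv)
    (hS : MeasurableSet S) : P.integ S f = ∫ s in S, f s * P.density μ s ∂μ := by
  obtain ⟨hp, hm⟩ := integrableOn_add_measure.1 hf
  have hpμ := νp_absolutelyContinuous hμ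
  have hmμ := νm_absolutelyContinuous hμ
  rw [integ, ← setIntegral_toReal_rnDeriv_mul hpμ hS, ← setIntegral_toReal_rnDeriv_mul hmμ hS,
    ← integral_sub (integrableOn_mul_rnDeriv hpμ hp hS) (integrableOn_mul_rnDeriv hmμ hm hS)]
  refine integral_congr_ae (Eventually.of_forall fun s => ?_)
  simp only [density]
  ring

theorem isBVPair (hμ : P.tv ≪ μ) : IsBVPair (Ioo (-1) 1) μ P.R (P.density μ) where
  isOpen := isOpen_Ioo
  starConvex := (convex_Ioo (-1) 1).starConvex (by norm_num)
  integrableOn_density t ht := by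
    simpa using integrableOn_mul_density hμ (P.integrableOn_seg_tv continuousOn_const ht)
      measurableSet_seg (f := fun _ => 1)
  integrableOn t ht := (integrableOn_mul_density hμ (P.integrableOn_seg_tv
    continuous_abs.continuousOn ht) measurableSet_seg).neg
  eq_add_prim t ht := by
    have hid : P.integ (seg t) (fun s => s) = prim μ (fun s => s * P.density μ s) t :=
      integ_eq_setIntegral_mul_density hμ (P.integrableOn_seg_tv continuousOn_id ht)
        measurableSet_seg
    rcases le_total 0 t with h | h
    · rw [P.fund_pos t ⟨h, ht.2⟩, prim_neg_abs_mul_of_nonneg h, ← hid, seg_of_nonneg h, integ,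
        sub_eq_add_neg]
    · rw [P.fund_neg t ⟨ht.1, h⟩, prim_neg_abs_mul_of_nonpos h, ← hid, seg_of_nonpos h, integ]

theorem T_eq_bvTransform (hμ : P.tv ≪ μ) (hf : ContinuousOn f (Ioo (-1 : ℝ) 1))
    (ht : t ∈ Ioo (-1 : ℝ) 1) : P.T f t = bvTransform μ P.R (P.density μ) f t := by
  rw [T, ite_add_mul_seg _ (P.integ · f), integ_eq_setIntegral_mul_density hμ
    (P.integrableOn_seg_tv hf ht) measurableSet_seg]
  rfl

theorem T_T_eq_bvTransform (hP : P.tv ≪ μ) (hQ : Q.tv ≪ μ) (hf : ContinuousOn f (Ioo (-1 : ℝ) 1))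
    (ht : t ∈ Ioo (-1 : ℝ) 1) :
    P.T (Q.T f) t =
      bvTransform μ P.R (P.density μ) (bvTransform μ Q.R (Q.density μ) f) t := by
  have hQf := (isBVPair hQ).continuousOn_bvTransform hf
  have hcongr : ∀ s ∈ Ioo (-1 : ℝ) 1, Q.T f s = _ := fun s hs => T_eq_bvTransform hQ hf hs
  rw [T_eq_bvTransform hP (hQf.congr hcongr) ht]
  exact bvTransform_congr fun s hs => hcongr s ((isBVPair hP).uIcc_subset ht hs)

theorem integ_add_integ_eq_prim (hP : P.tv ≪ μ) (hQ : Q.tv ≪ μ)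
    (hf : ContinuousOn f (Ioo (-1 : ℝ) 1)) (ht : t ∈ Ioo (-1 : ℝ) 1) :
    P.integ (seg t) (fun s => leftLim Q.R s * f s) +
        Q.integ (seg t) (fun s => rightLim P.R s * f s) =
      prim μ (fun s => f s * mulDensity μ P.R (P.density μ) Q.R (Q.density μ) s) t := by
  have hleft := (isBVPair hQ).integrableOn_leftLim_mul ht (P.integrableOn_seg_tv hf ht)
  have hright := (isBVPair hP).integrableOn_rightLim_mul ht (Q.integrableOn_seg_tv hf ht)
  rw [integ_eq_setIntegral_mul_density hP hleft measurableSet_seg,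
    integ_eq_setIntegral_mul_density hQ hright measurableSet_seg,
    ← integral_add (integrableOn_mul_density hP hleft measurableSet_seg)
      (integrableOn_mul_density hQ hright measurableSet_seg)]
  refine prim_congr fun s hs => ?_
  rw [← (isBVPair hP).leftLim_mul_add_rightLim_mul (isBVPair hQ)
    ((isBVPair hP).seg_subset ht hs) (ne_zero_of_mem_seg hs)]
  ring

theorem Tprod_eq_bvTransform (hP : P.tv ≪ μ) (hQ : Q.tv ≪ μ)
    (hf : ContinuousOn f (Ioo (-1 : ℝ) 1)) (ht : t ∈ Ioo (-1 : ℝ) 1) :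
    Tprod P Q f t = bvTransform μ (fun s => P.R s * Q.R s)
      (mulDensity μ P.R (P.density μ) Q.R (Q.density μ)) f t := by
  rw [bvTransform, ← integ_add_integ_eq_prim hP hQ hf ht]
  exact ite_add_mul_seg _ (fun S => P.integ S (fun s => leftLim Q.R s * f s) +
    Q.integ S (fun s => rightLim P.R s * f s)) t

theorem Tinv_eq_bvTransform (hμ : P.tv ≪ μ) (hR : BddAwayOnCompacts (Ioo (-1) 1) P.R)
    (hf : ContinuousOn f (Ioo (-1 : ℝ) 1)) (ht : t ∈ Ioo (-1 : ℝ) 1) :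
    P.Tinv f t = bvTransform μ (fun s => (P.R s)⁻¹) (invDensity μ P.R (P.density μ)) f t := by
  have hp := isBVPair hμ
  have hlim : ∀ s ∈ seg t, -((bvInnerLimit μ P.R (P.density μ) s)⁻¹ * (P.R s)⁻¹) =
      -(leftLim P.R s * rightLim P.R s)⁻¹ := fun s hs => by
    rw [hp.leftLim_mul_rightLim (hp.seg_subset ht hs) (ne_zero_of_mem_seg hs), mul_inv]
  have hint : IntegrableOn (fun s => -(leftLim P.R s * rightLim P.R s)⁻¹ * f s) (seg t) P.tv :=
    (hp.integrableOn_inv_mul_inv_mul hR ht (P.integrableOn_seg_tv hf ht)).congr_fun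
      (fun s hs => congrArg (· * f s) (hlim s hs)) measurableSet_seg
  have hprim : P.integ (seg t) (fun s => -(leftLim P.R s * rightLim P.R s)⁻¹ * f s) =
      prim μ (fun s => f s * invDensity μ P.R (P.density μ) s) t := by
    rw [integ_eq_setIntegral_mul_density hμ hint measurableSet_seg]
    refine prim_congr fun s hs => ?_
    rw [invDensity, hlim s hs]
    ring
  rw [bvTransform, ← hprim]
  exact ite_add_mul_seg _
    (P.integ · fun s => -(leftLim P.R s * rightLim P.R s)⁻¹ * f s) t

end Density

theorem tv_absolutelyContinuous_add_left (P Q : NormBV0) : P.tv ≪ P.tv + Q.tv :=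
  (Measure.le_add_right le_rfl).absolutelyContinuous

theorem tv_absolutelyContinuous_add_right (P Q : NormBV0) : Q.tv ≪ P.tv + Q.tv :=
  (Measure.le_add_left le_rfl).absolutelyContinuous

theorem integrableOn_leftLim (P Q : NormBV0) {K : Set ℝ} (hK : IsCompact K)
    (hKU : K ⊆ Ioo (-1 : ℝ) 1) : IntegrableOn (leftLim Q.R) K P.tv :=
  integrableOn_of_forall_seg P.tv_singleton_zero_ne_top (fun t ht => by
    simpa using (isBVPair (P := Q) .rfl).integrableOn_leftLim_mul ht
      (P.integrableOn_seg_tv (f := fun _ => 1) continuousOn_const ht)) hK hKU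

theorem integrableOn_rightLim (P Q : NormBV0) {K : Set ℝ} (hK : IsCompact K)
    (hKU : K ⊆ Ioo (-1 : ℝ) 1) : IntegrableOn (rightLim P.R) K Q.tv :=
  integrableOn_of_forall_seg Q.tv_singleton_zero_ne_top (fun t ht => by
    simpa using (isBVPair (P := P) .rfl).integrableOn_rightLim_mul ht
      (Q.integrableOn_seg_tv (f := fun _ => 1) continuousOn_const ht)) hK hKU

theorem mul_eq_of_nonneg (P Q : NormBV0) (ht : t ∈ Ico (0 : ℝ) 1) :
    P.R t * Q.R t = P.R 0 * Q.R 0 - (P.integ (Ioc 0 t) (fun s => s * leftLim Q.R s) +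
      Q.integ (Ioc 0 t) (fun s => s * rightLim P.R s)) := by
  have htU : t ∈ Ioo (-1 : ℝ) 1 := ⟨by linarith [ht.1], ht.2⟩
  have hP := tv_absolutelyContinuous_add_left P Q
  have hQ := tv_absolutelyContinuous_add_right P Q
  simp only [mul_comm _ (leftLim _ _), mul_comm _ (rightLim _ _)]
  rw [← seg_of_nonneg ht.1, integ_add_integ_eq_prim (f := fun s => s) hP hQ continuousOn_id htU,
    ((isBVPair hP).mul (isBVPair hQ)).eq_add_prim t htU, prim_neg_abs_mul_of_nonneg ht.1]
  rfl

theorem mul_eq_of_nonpos (P Q : NormBV0) (ht : t ∈ Ioc (-1 : ℝ) 0) :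
    P.R t * Q.R t = P.R 0 * Q.R 0 + (P.integ (Ico t 0) (fun s => s * leftLim Q.R s) +
      Q.integ (Ico t 0) (fun s => s * rightLim P.R s)) := by
  have htU : t ∈ Ioo (-1 : ℝ) 1 := ⟨ht.1, by linarith [ht.2]⟩
  have hP := tv_absolutelyContinuous_add_left P Q
  have hQ := tv_absolutelyContinuous_add_right P Q
  simp only [mul_comm _ (leftLim _ _), mul_comm _ (rightLim _ _)]
  rw [← seg_of_nonpos ht.2, integ_add_integ_eq_prim (f := fun s => s) hP hQ continuousOn_id htU,
    ((isBVPair hP).mul (isBVPair hQ)).eq_add_prim t htU, prim_neg_abs_mul_of_nonpos ht.2]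

theorem Tprod_eq_T_T (P Q : NormBV0) (hf : ContinuousOn f (Ioo (-1 : ℝ) 1))
    (ht : t ∈ Ioo (-1 : ℝ) 1) : Tprod P Q f t = P.T (Q.T f) t := by
  have hP := tv_absolutelyContinuous_add_left P Q
  have hQ := tv_absolutelyContinuous_add_right P Q
  rw [Tprod_eq_bvTransform hP hQ hf ht, T_T_eq_bvTransform hP hQ hf ht,
    (isBVPair hP).bvTransform_bvTransform (isBVPair hQ) hf ht]

theorem T_comm (P Q : NormBV0) (hf : ContinuousOn f (Ioo (-1 : ℝ) 1))
    (ht : t ∈ Ioo (-1 : ℝ) 1) : P.T (Q.T f) t = Q.T (P.T f) t := by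
  have hP := tv_absolutelyContinuous_add_left P Q
  have hQ := tv_absolutelyContinuous_add_right P Q
  rw [T_T_eq_bvTransform hP hQ hf ht, T_T_eq_bvTransform hQ hP hf ht,
    (isBVPair hP).bvTransform_comm (isBVPair hQ) hf ht]

theorem continuousOn_T (P : NormBV0) (hf : ContinuousOn f (Ioo (-1 : ℝ) 1)) :
    ContinuousOn (P.T f) (Ioo (-1 : ℝ) 1) :=
  ((isBVPair .rfl).continuousOn_bvTransform hf).congr fun _ ht => T_eq_bvTransform .rfl hf ht

theorem continuousOn_Tinv (P : NormBV0) (hR : BddAwayOnCompacts (Ioo (-1) 1) P.R)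
    (hf : ContinuousOn f (Ioo (-1 : ℝ) 1)) : ContinuousOn (P.Tinv f) (Ioo (-1 : ℝ) 1) :=
  (((isBVPair .rfl).inv hR).continuousOn_bvTransform hf).congr fun _ ht =>
    Tinv_eq_bvTransform .rfl hR hf ht

theorem T_Tinv (P : NormBV0) (hR : BddAwayOnCompacts (Ioo (-1) 1) P.R)
    (hf : ContinuousOn f (Ioo (-1 : ℝ) 1)) (ht : t ∈ Ioo (-1 : ℝ) 1) : P.T (P.Tinv f) t = f t := by
  have hp := isBVPair (P := P) .rfl
  rw [T_eq_bvTransform .rfl (P.continuousOn_Tinv hR hf) ht,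
    bvTransform_congr fun s hs => Tinv_eq_bvTransform .rfl hR hf (hp.uIcc_subset ht hs),
    hp.bvTransform_bvTransform_inv hR hf ht]

theorem Tinv_T (P : NormBV0) (hR : BddAwayOnCompacts (Ioo (-1) 1) P.R)
    (hf : ContinuousOn f (Ioo (-1 : ℝ) 1)) (ht : t ∈ Ioo (-1 : ℝ) 1) : P.Tinv (P.T f) t = f t := by
  have hp := isBVPair (P := P) .rfl
  rw [Tinv_eq_bvTransform .rfl hR (P.continuousOn_T hf) ht,
    bvTransform_congr fun s hs => T_eq_bvTransform .rfl hf (hp.uIcc_subset ht hs),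
    (hp.inv hR).bvTransform_comm hp hf ht, hp.bvTransform_bvTransform_inv hR hf ht]

end NormBV0

/-- `(RQ, ν_{RQ})` is a normalized BV₀ pair (locally finite densities and
fundamental relations), the transforms satisfy `T_{RQ} = T_R ∘ T_Q = T_Q ∘ T_R` on continuous
functions, and if `inf_K |R| > 0` on compacts then `T_R` is a bijection of `C(-1,1)` onto
itself with inverse `T_{1/R, ν_{1/R}}`. -/
theorem bv0_product_pair_and_semigroup (P Q : NormBV0) :
    (∀ K : Set ℝ, IsCompact K → K ⊆ Set.Ioo (-1 : ℝ) 1 →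
      MeasureTheory.IntegrableOn (fun t => Function.leftLim Q.R t) K (P.νp + P.νm) ∧
      MeasureTheory.IntegrableOn (fun t => Function.rightLim P.R t) K (Q.νp + Q.νm)) ∧
    (∀ t ∈ Set.Ico (0 : ℝ) 1,
      P.R t * Q.R t = P.R 0 * Q.R 0 -
        (P.integ (Set.Ioc 0 t) (fun s => s * Function.leftLim Q.R s) +
          Q.integ (Set.Ioc 0 t) (fun s => s * Function.rightLim P.R s))) ∧
    (∀ t ∈ Set.Ioc (-1 : ℝ) 0,
      P.R t * Q.R t = P.R 0 * Q.R 0 +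
        (P.integ (Set.Ico t 0) (fun s => s * Function.leftLim Q.R s) +
          Q.integ (Set.Ico t 0) (fun s => s * Function.rightLim P.R s))) ∧
    (∀ f : ℝ → ℝ, ContinuousOn f (Set.Ioo (-1 : ℝ) 1) → ∀ t ∈ Set.Ioo (-1 : ℝ) 1,
      NormBV0.Tprod P Q f t = P.T (Q.T f) t ∧ NormBV0.Tprod P Q f t = Q.T (P.T f) t) ∧
    ((∀ K : Set ℝ, IsCompact K → K ⊆ Set.Ioo (-1 : ℝ) 1 →
        ∃ ε > (0 : ℝ), ∀ t ∈ K, ε ≤ |P.R t|) →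
      (∀ f : ℝ → ℝ, ContinuousOn f (Set.Ioo (-1 : ℝ) 1) →
        ContinuousOn (P.T f) (Set.Ioo (-1 : ℝ) 1) ∧
        ContinuousOn (P.Tinv f) (Set.Ioo (-1 : ℝ) 1) ∧
        (∀ t ∈ Set.Ioo (-1 : ℝ) 1, P.Tinv (P.T f) t = f t ∧ P.T (P.Tinv f) t = f t)) ∧
      (∀ g : ℝ → ℝ, ContinuousOn g (Set.Ioo (-1 : ℝ) 1) →
        ∃ f : ℝ → ℝ, ContinuousOn f (Set.Ioo (-1 : ℝ) 1) ∧
          ∀ t ∈ Set.Ioo (-1 : ℝ) 1, P.T f t = g t)) := by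
  refine ⟨fun K hK hKU => ⟨P.integrableOn_leftLim Q hK hKU, P.integrableOn_rightLim Q hK hKU⟩,
    fun t ht => P.mul_eq_of_nonneg Q ht, fun t ht => P.mul_eq_of_nonpos Q ht,
    fun f hf t ht => ?_, fun hR => ⟨fun f hf => ?_, fun g hg => ?_⟩⟩
  · have hmul := P.Tprod_eq_T_T Q hf ht
    exact ⟨hmul, hmul.trans (P.T_comm Q hf ht)⟩
  · exact ⟨P.continuousOn_T hf, P.continuousOn_Tinv hR hf,
      fun t ht => ⟨P.Tinv_T hR hf ht, P.T_Tinv hR hf ht⟩⟩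
  · exact ⟨P.Tinv g, P.continuousOn_Tinv hR hg, fun t ht => P.T_Tinv hR hg ht⟩
end
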